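/- arXiv:math/0406455 — 10 statements merged into one kernel-verified Lean document; each statement's English description precedes it below -/
import Mathlib

section
/- Let u be a k-dimensional random vector with the multivariate normal distribution N(0, Σ), where Σ is a k×k positive definite real matrix, and let A₁ and A₂ be k×k symmetric real matrices. Then E[u (u′A₁u − E[u′A₁u])(u′A₂u − E[u′A₂u]) u′] = 2 tr(A₁ Σ A₂ Σ) Σ + 4 Σ A₁ Σ A₂ Σ + 4 Σ A₂ Σ A₁ Σ (an identity of k×k matrices, the expectation taken entrywise). -/
open MeasureTheory Matrix Real

/-- The multivariate normal distribution `N(0, S)` on `ℝ^k`, defined through its density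
with respect to Lebesgue measure. -/
noncomputable def mvGaussian (k : ℕ) (S : Matrix (Fin k) (Fin k) ℝ) :
    Measure (Fin k → ℝ) :=
  volume.withDensity fun x =>
    ENNReal.ofReal ((2 * Real.pi) ^ (-(k : ℝ) / 2) * S.det ^ (-(1 : ℝ) / 2) *
      Real.exp (-(x ⬝ᵥ (S⁻¹ *ᵥ x)) / 2))

/-
Write `q_A(x) = x′Ax - tr(AΣ)`. Integration by parts against the density gives Stein's identity
`E[(w·u) f(u)] = E[Df(u)(Σw)]`. Since `x′Ax` is a sum of products of two linear forms, applying it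
with one of the two factors as part of `f` gives `E[q_A(u) f(u)] = E[Df(u)(ΣAu)]`. For
`f = (v·x)(w·x) q_B` the right-hand side is again a sum of expectations of quadratic forms times
products of two linear forms, to which the same identity applies once more.

The boundary terms vanish because all integrands have temperate growth: `u` is the image of a
standard normal vector under `Σ^{1/2}`, hence a Gaussian vector, and Gaussian measures have finite
moments of all orders.
-/

open ProbabilityTheory

section GaussianLaw

theorem pi_gaussianReal_eq_withDensity {ι : Type*} [Fintype ι] (m : ι → ℝ) {v : ι → NNReal}
    (hv : ∀ i, v i ≠ 0) :
    Measure.pi (fun i ↦ gaussianReal (m i) (v i)) =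
      volume.withDensity fun x ↦ ENNReal.ofReal (∏ i, gaussianPDFReal (m i) (v i) (x i)) := by
  refine Measure.pi_eq fun s hs ↦ ?_
  rw [withDensity_apply _ (.univ_pi hs), volume_pi, Measure.restrict_pi_pi,
    ← ofReal_integral_eq_lintegral_ofReal, integral_fintype_prod_eq_prod,
    ENNReal.ofReal_prod_of_nonneg]
  · exact Finset.prod_congr rfl fun i _ ↦ (gaussianReal_apply_eq_integral _ (hv i) _).symm
  · exact fun i _ ↦ integral_nonneg fun _ ↦ gaussianPDFReal_nonneg _ _ _
  · exact .fintype_prod fun i ↦ (integrable_gaussianPDFReal _ _).integrableOn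
  · exact .of_forall fun x ↦ Finset.prod_nonneg fun i _ ↦ gaussianPDFReal_nonneg _ _ _

instance isGaussian_pi {ι : Type*} [Fintype ι] {E : ι → Type*} [∀ i, NormedAddCommGroup (E i)]
    [∀ i, NormedSpace ℝ (E i)] [∀ i, MeasurableSpace (E i)] [∀ i, BorelSpace (E i)]
    [∀ i, CompleteSpace (E i)] [∀ i, SecondCountableTopology (E i)] (μ : ∀ i, Measure (E i))
    [∀ i, IsGaussian (μ i)] : IsGaussian (Measure.pi μ) := by
  have hasGaussianLaw_eval (i : ι) : HasGaussianLaw (fun x : ∀ i, E i ↦ x i) (Measure.pi μ) :=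
    ⟨by rw [(measurePreserving_eval μ i).map_eq]; infer_instance⟩
  have hasGaussianLaw := iIndepFun.hasGaussianLaw hasGaussianLaw_eval
    (iIndepFun_pi (X := fun i x ↦ x) (by fun_prop))
  simpa using hasGaussianLaw.isGaussian_map

theorem mvGaussian_one (k : ℕ) : mvGaussian k 1 = Measure.pi fun _ ↦ gaussianReal 0 1 := by
  rw [pi_gaussianReal_eq_withDensity _ fun _ ↦ one_ne_zero, mvGaussian]
  congr! 3 with x
  simp only [gaussianPDFReal, NNReal.coe_one, mul_one, sub_zero, Finset.prod_mul_distrib,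
    ← Real.exp_sum, Finset.prod_const, Finset.card_univ, Fintype.card_fin]
  congr 1
  · rw [det_one, one_rpow, mul_one, Real.sqrt_eq_rpow, ← Real.rpow_neg (by positivity),
      ← Real.rpow_mul_natCast (by positivity)]
    congr 1
    ring
  · rw [inv_one, one_mulVec, dotProduct, ← Finset.sum_div, Finset.sum_neg_distrib]
    simp only [sq]

/-- The density of `N(0, S)` with respect to Lebesgue measure, as a real-valued function. -/
noncomputable def mvGaussianPDFReal {k : ℕ} (S : Matrix (Fin k) (Fin k) ℝ) (x : Fin k → ℝ) : ℝ :=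
  (2 * π) ^ (-(k : ℝ) / 2) * S.det ^ (-(1 : ℝ) / 2) * rexp (-(x ⬝ᵥ S⁻¹ *ᵥ x) / 2)

variable {k : ℕ} {S R : Matrix (Fin k) (Fin k) ℝ}

theorem mvGaussian_eq_withDensity (S : Matrix (Fin k) (Fin k) ℝ) :
    mvGaussian k S = volume.withDensity fun x ↦ ENNReal.ofReal (mvGaussianPDFReal S x) :=
  rfl

theorem mvGaussianPDFReal_nonneg (hS : 0 ≤ S.det) (x : Fin k → ℝ) : 0 ≤ mvGaussianPDFReal S x := by
  unfold mvGaussianPDFReal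
  positivity

theorem measurable_mvGaussianPDFReal : Measurable (mvGaussianPDFReal S) := by
  unfold mvGaussianPDFReal dotProduct mulVec
  fun_prop

theorem mvGaussianPDFReal_mulVec (hS : 0 ≤ S.det) (hR : R.det ≠ 0) (x : Fin k → ℝ) :
    mvGaussianPDFReal (R * S * Rᵀ) (R *ᵥ x) = |R.det|⁻¹ * mvGaussianPDFReal S x := by
  have det_rpow : (R * S * Rᵀ).det ^ (-(1 : ℝ) / 2) = |R.det|⁻¹ * S.det ^ (-(1 : ℝ) / 2) := by
    rw [det_mul, det_mul, det_transpose, mul_right_comm, ← sq, ← sq_abs,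
      mul_rpow (by positivity) hS, ← rpow_natCast_mul (abs_nonneg _)]
    norm_num [rpow_neg_one]
  have quadForm : (R *ᵥ x) ⬝ᵥ (R * S * Rᵀ)⁻¹ *ᵥ R *ᵥ x = x ⬝ᵥ S⁻¹ *ᵥ x := by
    have transpose_mul_inv : Rᵀ * Rᵀ⁻¹ = 1 :=
      mul_nonsing_inv _ (by rw [det_transpose]; exact hR.isUnit)
    rw [Matrix.mul_inv_rev, Matrix.mul_inv_rev, mulVec_mulVec, Matrix.mul_assoc, Matrix.mul_assoc,
      nonsing_inv_mul _ hR.isUnit, Matrix.mul_one, dotProduct_comm,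
      ← dotProduct_transpose_mulVec, mulVec_mulVec, ← Matrix.mul_assoc, transpose_mul_inv,
      Matrix.one_mul]
  rw [mvGaussianPDFReal, mvGaussianPDFReal, det_rpow, quadForm]
  ring

theorem map_mulVec_mvGaussian (hS : 0 ≤ S.det) (hR : R.det ≠ 0) :
    (mvGaussian k S).map (R *ᵥ ·) = mvGaussian k (R * S * Rᵀ) := by
  have measurable_mulVec : Measurable (R *ᵥ ·) := by unfold mulVec dotProduct; fun_prop
  have map_volume : volume.map (R *ᵥ ·) = ENNReal.ofReal |R.det|⁻¹ • volume := by
    rw [← abs_inv]; exact map_matrix_volume_pi_eq_smul_volume_pi hR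
  ext s hs
  calc (mvGaussian k S).map (R *ᵥ ·) s
      = ∫⁻ x in (R *ᵥ ·) ⁻¹' s, ENNReal.ofReal |R.det| *
          ENNReal.ofReal (mvGaussianPDFReal (R * S * Rᵀ) (R *ᵥ x)) := by
        rw [Measure.map_apply measurable_mulVec hs, mvGaussian_eq_withDensity,
          withDensity_apply _ (measurable_mulVec hs)]
        simp_rw [← ENNReal.ofReal_mul (abs_nonneg R.det), mvGaussianPDFReal_mulVec hS hR,
          mul_inv_cancel_left₀ (abs_ne_zero.2 hR)]
    _ = ∫⁻ y in s, ENNReal.ofReal |R.det| *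
          ENNReal.ofReal (mvGaussianPDFReal (R * S * Rᵀ) y) ∂volume.map (R *ᵥ ·) :=
        (setLIntegral_map hs
          (measurable_mvGaussianPDFReal.ennreal_ofReal.const_mul _) measurable_mulVec).symm
    _ = mvGaussian k (R * S * Rᵀ) s := by
        rw [map_volume, setLIntegral_smul_measure, lintegral_const_mul _
          measurable_mvGaussianPDFReal.ennreal_ofReal, mvGaussian_eq_withDensity,
          withDensity_apply _ hs, smul_eq_mul, ← mul_assoc,
          ← ENNReal.ofReal_mul (by positivity), inv_mul_cancel₀ (abs_ne_zero.2 hR),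
          ENNReal.ofReal_one, one_mul]

open scoped MatrixOrder in
theorem isGaussian_mvGaussian (hS : S.PosDef) : IsGaussian (mvGaussian k S) := by
  have sqrt_mul_sqrt : CFC.sqrt S * CFC.sqrt S = S :=
    CFC.sqrt_mul_sqrt_self S hS.posSemidef.nonneg
  have sqrt_transpose : (CFC.sqrt S)ᵀ = CFC.sqrt S := (CFC.sqrt_nonneg S).isSelfAdjoint
  have det_sqrt_ne_zero : (CFC.sqrt S).det ≠ 0 :=
    left_ne_zero_of_mul <| by rw [← det_mul, sqrt_mul_sqrt]; exact hS.det_pos.ne'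
  have map_mvGaussian_one := map_mulVec_mvGaussian (S := 1) (by simp) det_sqrt_ne_zero
  rw [mul_one, sqrt_transpose, sqrt_mul_sqrt, mvGaussian_one] at map_mvGaussian_one
  rw [← map_mvGaussian_one]
  exact isGaussian_map (mulVecLin (CFC.sqrt S)).toContinuousLinearMap

end GaussianLaw

section TemperateGrowth

theorem differentiable_of_hasTemperateGrowth {E F : Type*} [NormedAddCommGroup E]
    [NormedSpace ℝ E] [NormedAddCommGroup F] [NormedSpace ℝ F] {f : E → F}
    (hf : f.HasTemperateGrowth) : Differentiable ℝ f :=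
  hf.1.differentiable (by simp)

theorem hasTemperateGrowth_fderiv {E F : Type*} [NormedAddCommGroup E] [NormedSpace ℝ E]
    [NormedAddCommGroup F] [NormedSpace ℝ F] {f : E → F} (hf : f.HasTemperateGrowth) :
    (fderiv ℝ f).HasTemperateGrowth :=
  ⟨hf.1.fderiv_right (by simp), fun n ↦ by
    simpa only [norm_iteratedFDeriv_fderiv] using hf.2 (n + 1)⟩

@[fun_prop]
theorem hasTemperateGrowth_fderiv_apply {E F : Type*} [NormedAddCommGroup E] [NormedSpace ℝ E]
    [NormedAddCommGroup F] [NormedSpace ℝ F] {f : E → F} {g : E → E} (hf : f.HasTemperateGrowth)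
    (hg : g.HasTemperateGrowth) : (fun x ↦ fderiv ℝ f x (g x)).HasTemperateGrowth :=
  (ContinuousLinearMap.id ℝ (E →L[ℝ] F)).bilinear_hasTemperateGrowth
    (hasTemperateGrowth_fderiv hf) hg

theorem fderiv_mul_apply {E : Type*} [NormedAddCommGroup E] [NormedSpace ℝ E] {f g : E → ℝ} {x : E}
    (hf : DifferentiableAt ℝ f x) (hg : DifferentiableAt ℝ g x) (d : E) :
    fderiv ℝ (fun y ↦ f y * g y) x d = fderiv ℝ f x d * g x + f x * fderiv ℝ g x d := by
  rw [fderiv_fun_mul hf hg]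
  simp only [_root_.add_apply, _root_.smul_apply, smul_eq_mul]
  ring

variable {ι E : Type*} [Fintype ι] [NormedAddCommGroup E] [NormedSpace ℝ E] {f g : E → ι → ℝ}

@[fun_prop]
theorem hasTemperateGrowth_dotProduct (hf : f.HasTemperateGrowth) (hg : g.HasTemperateGrowth) :
    (fun x ↦ f x ⬝ᵥ g x).HasTemperateGrowth :=
  (dotProductBilin ℝ ℝ : (ι → ℝ) →ₗ[ℝ] _).toContinuousBilinearMap.bilinear_hasTemperateGrowth hf hg

@[fun_prop]
theorem hasTemperateGrowth_mulVec {κ : Type*} [Fintype κ] (A : Matrix κ ι ℝ)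
    (hf : f.HasTemperateGrowth) : (fun x ↦ A *ᵥ f x).HasTemperateGrowth :=
  A.mulVecLin.toContinuousLinearMap.hasTemperateGrowth.comp hf

@[fun_prop]
theorem differentiableAt_dotProduct {x : E} (hf : DifferentiableAt ℝ f x)
    (hg : DifferentiableAt ℝ g x) : DifferentiableAt ℝ (fun y ↦ f y ⬝ᵥ g y) x := by
  unfold dotProduct
  fun_prop

theorem fderiv_dotProduct_apply {x : E} (hf : DifferentiableAt ℝ f x) (hg : DifferentiableAt ℝ g x)
    (d : E) : fderiv ℝ (fun y ↦ f y ⬝ᵥ g y) x d =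
      f x ⬝ᵥ fderiv ℝ g x d + fderiv ℝ f x d ⬝ᵥ g x :=
  congr($((dotProductBilin ℝ ℝ).toContinuousBilinearMap.fderiv_of_bilinear hf hg) d)

theorem fderiv_const_dotProduct (v x d : ι → ℝ) : fderiv ℝ (fun y ↦ v ⬝ᵥ y) x d = v ⬝ᵥ d := by
  rw [fderiv_dotProduct_apply (differentiableAt_const v) differentiableAt_fun_id, fderiv_fun_const,
    fderiv_fun_id]
  simp

theorem fderiv_dotProduct_mul_dotProduct (v w x d : ι → ℝ) :
    fderiv ℝ (fun y ↦ (v ⬝ᵥ y) * (w ⬝ᵥ y)) x d = (v ⬝ᵥ d) * (w ⬝ᵥ x) + (v ⬝ᵥ x) * (w ⬝ᵥ d) := by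
  rw [fderiv_mul_apply (by fun_prop) (by fun_prop), fderiv_const_dotProduct,
    fderiv_const_dotProduct]

theorem fderiv_quadForm (A : Matrix ι ι ℝ) (x d : ι → ℝ) :
    fderiv ℝ (fun y ↦ y ⬝ᵥ A *ᵥ y) x d = x ⬝ᵥ A *ᵥ d + d ⬝ᵥ A *ᵥ x := by
  have hasFDerivAt_mulVec : HasFDerivAt (A *ᵥ ·) A.mulVecLin.toContinuousLinearMap x :=
    A.mulVecLin.toContinuousLinearMap.hasFDerivAt
  rw [fderiv_dotProduct_apply differentiableAt_fun_id hasFDerivAt_mulVec.differentiableAt,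
    hasFDerivAt_mulVec.fderiv, fderiv_fun_id]
  rfl

theorem integrable_of_hasTemperateGrowth {E F : Type*} [NormedAddCommGroup E] [NormedSpace ℝ E]
    [CompleteSpace E] [SecondCountableTopology E] [MeasurableSpace E] [BorelSpace E]
    [NormedAddCommGroup F] [NormedSpace ℝ F] {μ : Measure E} [IsGaussian μ] {f : E → F}
    (hf : f.HasTemperateGrowth) : Integrable f μ := by
  obtain ⟨n, C, hC⟩ := hf.2 0
  have one_add_norm_memLp : MemLp (fun x : E ↦ 1 + ‖x‖) n μ :=
    (memLp_const (1 : ℝ)).add (IsGaussian.memLp_id μ n (by simp)).norm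
  have norm_le (x : E) : ‖f x‖ ≤ C * ‖1 + ‖x‖‖ ^ n := by
    simpa [abs_of_nonneg (show 0 ≤ 1 + ‖x‖ by positivity)] using hC x
  exact (one_add_norm_memLp.integrable_norm_pow'.const_mul C).mono'
    hf.1.continuous.aestronglyMeasurable (.of_forall norm_le)

end TemperateGrowth

section Moments

variable {k : ℕ} {S : Matrix (Fin k) (Fin k) ℝ}

theorem hasFDerivAt_mvGaussianPDFReal (S : Matrix (Fin k) (Fin k) ℝ) (x : Fin k → ℝ) :
    HasFDerivAt (mvGaussianPDFReal S)
      (mvGaussianPDFReal S x • (-(1 / 2 : ℝ)) • fderiv ℝ (fun y ↦ y ⬝ᵥ S⁻¹ *ᵥ y) x) x := by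
  have differentiable_quadForm : Differentiable ℝ fun y ↦ y ⬝ᵥ S⁻¹ *ᵥ y :=
    differentiable_of_hasTemperateGrowth (by fun_prop)
  have hasFDerivAt_exponent := (differentiable_quadForm x).hasFDerivAt.const_mul (-(1 / 2))
  convert! hasFDerivAt_exponent.exp.const_mul
    ((2 * π) ^ (-(k : ℝ) / 2) * S.det ^ (-(1 : ℝ) / 2)) using 1
  · ext y; rw [mvGaussianPDFReal]; ring_nf
  · rw [mvGaussianPDFReal, smul_smul _ (rexp _)]; ring_nf

theorem fderiv_mvGaussianPDFReal_mulVec (hS : S.PosDef) (x w : Fin k → ℝ) :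
    fderiv ℝ (mvGaussianPDFReal S) x (S *ᵥ w) = mvGaussianPDFReal S x * -(w ⬝ᵥ x) := by
  have isUnit_det : IsUnit S.det := hS.det_pos.ne'.isUnit
  have transpose_eq : Sᵀ = S := hS.isHermitian
  have inv_mulVec : S⁻¹ *ᵥ S *ᵥ w = w := by
    rw [mulVec_mulVec, nonsing_inv_mul _ isUnit_det, one_mulVec]
  have mulVec_dotProduct : (S *ᵥ w) ⬝ᵥ S⁻¹ *ᵥ x = w ⬝ᵥ x := by
    rw [← transpose_eq, mulVec_transpose, ← dotProduct_mulVec, transpose_eq, mulVec_mulVec,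
      mul_nonsing_inv _ isUnit_det, one_mulVec]
  rw [(hasFDerivAt_mvGaussianPDFReal S x).fderiv]
  simp only [_root_.smul_apply, smul_eq_mul, fderiv_quadForm, inv_mulVec,
    mulVec_dotProduct, dotProduct_comm x w]
  ring

theorem integral_mvGaussian_eq_integral_smul {F : Type*} [NormedAddCommGroup F] [NormedSpace ℝ F]
    (hS : 0 ≤ S.det) (g : (Fin k → ℝ) → F) :
    ∫ x, g x ∂mvGaussian k S = ∫ x, mvGaussianPDFReal S x • g x := by
  rw [mvGaussian_eq_withDensity, integral_withDensity_eq_integral_toReal_smul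
    measurable_mvGaussianPDFReal.ennreal_ofReal (.of_forall fun _ ↦ ENNReal.ofReal_lt_top)]
  simp only [ENNReal.toReal_ofReal (mvGaussianPDFReal_nonneg hS _)]

theorem integrable_mvGaussian_iff_integrable_smul {F : Type*} [NormedAddCommGroup F]
    [NormedSpace ℝ F] (hS : 0 ≤ S.det) {g : (Fin k → ℝ) → F} :
    Integrable g (mvGaussian k S) ↔ Integrable fun x ↦ mvGaussianPDFReal S x • g x := by
  rw [mvGaussian_eq_withDensity, integrable_withDensity_iff_integrable_smul'
    measurable_mvGaussianPDFReal.ennreal_ofReal (.of_forall fun _ ↦ ENNReal.ofReal_lt_top)]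
  simp only [ENNReal.toReal_ofReal (mvGaussianPDFReal_nonneg hS _)]

theorem integral_dotProduct_mul_mvGaussian (hS : S.PosDef) {f : (Fin k → ℝ) → ℝ}
    (hf : f.HasTemperateGrowth) (w : Fin k → ℝ) :
    ∫ x, (w ⬝ᵥ x) * f x ∂mvGaussian k S = ∫ x, fderiv ℝ f x (S *ᵥ w) ∂mvGaussian k S := by
  have := isGaussian_mvGaussian hS
  have integrable_pdf_mul {g : (Fin k → ℝ) → ℝ} (hg : g.HasTemperateGrowth) :
      Integrable fun x ↦ mvGaussianPDFReal S x * g x :=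
    (integrable_mvGaussian_iff_integrable_smul hS.det_pos.le).1
      (integrable_of_hasTemperateGrowth hg)
  have parts : ∫ x, mvGaussianPDFReal S x * fderiv ℝ f x (S *ᵥ w) =
      -∫ x, fderiv ℝ (mvGaussianPDFReal S) x (S *ᵥ w) * f x := by
    refine integral_mul_fderiv_eq_neg_fderiv_mul_of_integrable ?_
      (integrable_pdf_mul (by fun_prop)) (integrable_pdf_mul hf)
      (fun x _ ↦ (hasFDerivAt_mvGaussianPDFReal S x).differentiableAt)
      (fun x _ ↦ differentiable_of_hasTemperateGrowth hf x)
    simpa only [fderiv_mvGaussianPDFReal_mulVec hS, mul_assoc] using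
      integrable_pdf_mul (g := fun x ↦ -(w ⬝ᵥ x) * f x) (by fun_prop)
  simp only [integral_mvGaussian_eq_integral_smul hS.det_pos.le, smul_eq_mul, parts,
    fderiv_mvGaussianPDFReal_mulVec hS, mul_neg, neg_mul, integral_neg, neg_neg, mul_assoc]

theorem integral_quadForm_mul_mvGaussian (hS : S.PosDef) {f : (Fin k → ℝ) → ℝ}
    (hf : f.HasTemperateGrowth) (A : Matrix (Fin k) (Fin k) ℝ) :
    ∫ x, (x ⬝ᵥ A *ᵥ x) * f x ∂mvGaussian k S =
      (A * S).trace * ∫ x, f x ∂mvGaussian k S +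
        ∫ x, fderiv ℝ f x (S *ᵥ A *ᵥ x) ∂mvGaussian k S := by
  have := isGaussian_mvGaussian hS
  let e (i : Fin k) : Fin k → ℝ := Pi.single i 1
  have quadForm_eq_sum (x : Fin k → ℝ) : x ⬝ᵥ A *ᵥ x = ∑ i, (e i ⬝ᵥ x) * (A i ⬝ᵥ x) := by
    simp only [e, single_one_dotProduct]
    rfl
  have trace_eq_sum : (A * S).trace = ∑ i, A i ⬝ᵥ S *ᵥ e i := by
    simp only [e, mulVec_single_one]
    rfl
  have mulVec_mulVec_eq_sum (x : Fin k → ℝ) : S *ᵥ A *ᵥ x = ∑ i, (A i ⬝ᵥ x) • S *ᵥ e i := by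
    rw [mulVec_eq_sum (A *ᵥ x) S]
    simp only [op_smul_eq_smul, e, mulVec_single_one]
    rfl
  calc ∫ x, (x ⬝ᵥ A *ᵥ x) * f x ∂mvGaussian k S
      = ∑ i, ∫ x, (e i ⬝ᵥ x) * ((A i ⬝ᵥ x) * f x) ∂mvGaussian k S := by
        rw [← integral_finsetSum _ fun i _ ↦ integrable_of_hasTemperateGrowth (by fun_prop)]
        simp only [quadForm_eq_sum, Finset.sum_mul, mul_assoc]
    _ = ∑ i, ∫ x, fderiv ℝ (fun y ↦ (A i ⬝ᵥ y) * f y) x (S *ᵥ e i) ∂mvGaussian k S :=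
        Finset.sum_congr rfl fun i _ ↦ integral_dotProduct_mul_mvGaussian hS (by fun_prop) (e i)
    _ = ∫ x, (A * S).trace * f x + fderiv ℝ f x (S *ᵥ A *ᵥ x) ∂mvGaussian k S := by
        rw [← integral_finsetSum _ fun i _ ↦ integrable_of_hasTemperateGrowth (by fun_prop)]
        congr! 2 with x
        rw [trace_eq_sum, mulVec_mulVec_eq_sum, map_sum, Finset.sum_mul, ← Finset.sum_add_distrib]
        refine Finset.sum_congr rfl fun i _ ↦ ?_
        rw [fderiv_mul_apply (by fun_prop) (differentiable_of_hasTemperateGrowth hf x),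
          fderiv_const_dotProduct, map_smul, smul_eq_mul]
    _ = _ := by
        rw [integral_add (integrable_of_hasTemperateGrowth (by fun_prop))
          (integrable_of_hasTemperateGrowth (by fun_prop)), integral_const_mul]

theorem integral_quadForm_mvGaussian (hS : S.PosDef) (A : Matrix (Fin k) (Fin k) ℝ) :
    ∫ x, x ⬝ᵥ A *ᵥ x ∂mvGaussian k S = (A * S).trace := by
  have := isGaussian_mvGaussian hS
  simpa using integral_quadForm_mul_mvGaussian hS (f := fun _ ↦ 1) (by fun_prop) A

/-- The quadratic form `x ↦ x′Ax` minus `tr(AS)`, its expectation under `N(0, S)`. -/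
def centeredQuadForm (S A : Matrix (Fin k) (Fin k) ℝ) (x : Fin k → ℝ) : ℝ :=
  x ⬝ᵥ A *ᵥ x - (A * S).trace

@[fun_prop]
theorem hasTemperateGrowth_centeredQuadForm (S A : Matrix (Fin k) (Fin k) ℝ) :
    (centeredQuadForm S A).HasTemperateGrowth := by
  unfold centeredQuadForm
  fun_prop

theorem differentiable_centeredQuadForm (S A : Matrix (Fin k) (Fin k) ℝ) :
    Differentiable ℝ (centeredQuadForm S A) :=
  differentiable_of_hasTemperateGrowth (by fun_prop)

theorem fderiv_centeredQuadForm (S A : Matrix (Fin k) (Fin k) ℝ) (x d : Fin k → ℝ) :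
    fderiv ℝ (centeredQuadForm S A) x d = x ⬝ᵥ A *ᵥ d + d ⬝ᵥ A *ᵥ x := by
  rw [← fderiv_quadForm]
  exact congr($(fderiv_sub_const _) d)

theorem fderiv_centeredQuadForm_mulVec (S A B : Matrix (Fin k) (Fin k) ℝ) (x : Fin k → ℝ) :
    fderiv ℝ (centeredQuadForm S A) x (B *ᵥ x) =
      centeredQuadForm S ((A + Aᵀ) * B) x + ((A + Aᵀ) * B * S).trace := by
  rw [fderiv_centeredQuadForm, centeredQuadForm, sub_add_cancel, dotProduct_comm (B *ᵥ x),
    ← vecMul_transpose A x, ← dotProduct_mulVec, ← dotProduct_add, ← add_mulVec, mulVec_mulVec]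

theorem integral_centeredQuadForm_mul (hS : S.PosDef) {f : (Fin k → ℝ) → ℝ}
    (hf : f.HasTemperateGrowth) (A : Matrix (Fin k) (Fin k) ℝ) :
    ∫ x, centeredQuadForm S A x * f x ∂mvGaussian k S =
      ∫ x, fderiv ℝ f x (S *ᵥ A *ᵥ x) ∂mvGaussian k S := by
  have := isGaussian_mvGaussian hS
  simp only [centeredQuadForm, sub_mul]
  rw [integral_sub (integrable_of_hasTemperateGrowth (by fun_prop))
    (integrable_of_hasTemperateGrowth (by fun_prop)), integral_quadForm_mul_mvGaussian hS hf,
    integral_const_mul, add_sub_cancel_left]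

theorem integral_dotProduct_mul_dotProduct_mvGaussian (hS : S.PosDef) (v w : Fin k → ℝ) :
    ∫ x, (v ⬝ᵥ x) * (w ⬝ᵥ x) ∂mvGaussian k S = v ⬝ᵥ S *ᵥ w := by
  have := isGaussian_mvGaussian hS
  simp only [mul_comm (v ⬝ᵥ _)]
  simp [integral_dotProduct_mul_mvGaussian hS (f := (v ⬝ᵥ ·)) (by fun_prop),
    fderiv_const_dotProduct]

theorem integral_centeredQuadForm_mul_dotProduct_mul_dotProduct (hS : S.PosDef)
    (M : Matrix (Fin k) (Fin k) ℝ) (v w : Fin k → ℝ) :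
    ∫ x, centeredQuadForm S M x * ((v ⬝ᵥ x) * (w ⬝ᵥ x)) ∂mvGaussian k S =
      v ⬝ᵥ (S * (M + Mᵀ) * S) *ᵥ w := by
  have := isGaussian_mvGaussian hS
  have transpose_eq : Sᵀ = S := hS.isHermitian
  have dot_mulVec (a x : Fin k → ℝ) : a ⬝ᵥ S *ᵥ M *ᵥ x = (a ᵥ* (S * M)) ⬝ᵥ x := by
    rw [mulVec_mulVec, dotProduct_mulVec]
  rw [integral_centeredQuadForm_mul hS (by fun_prop)]
  simp only [fderiv_dotProduct_mul_dotProduct, dot_mulVec]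
  rw [integral_add (integrable_of_hasTemperateGrowth (by fun_prop))
    (integrable_of_hasTemperateGrowth (by fun_prop)),
    integral_dotProduct_mul_dotProduct_mvGaussian hS,
    integral_dotProduct_mul_dotProduct_mvGaussian hS, ← dotProduct_mulVec, ← mulVec_transpose,
    transpose_mul, transpose_eq]
  simp only [Matrix.mul_add, Matrix.add_mul, add_mulVec, dotProduct_add, mulVec_mulVec,
    Matrix.mul_assoc]

theorem integral_centeredQuadForm_mul_centeredQuadForm_mul_dotProduct_mul_dotProduct
    (hS : S.PosDef) (A B : Matrix (Fin k) (Fin k) ℝ) (v w : Fin k → ℝ) :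
    ∫ x, centeredQuadForm S A x * (centeredQuadForm S B x * ((v ⬝ᵥ x) * (w ⬝ᵥ x)))
        ∂mvGaussian k S =
      (A * S * (B + Bᵀ) * S).trace * (v ⬝ᵥ S *ᵥ w) +
        v ⬝ᵥ (S * (A + Aᵀ) * S * (B + Bᵀ) * S + S * (B + Bᵀ) * S * (A + Aᵀ) * S) *ᵥ w := by
  have := isGaussian_mvGaussian hS
  have transpose_eq : Sᵀ = S := hS.isHermitian
  let M := (B + Bᵀ) * (S * A)
  have trace_eq : (M * S).trace = (A * S * (B + Bᵀ) * S).trace := by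
    simp only [M, ← Matrix.mul_assoc]
    rw [Matrix.mul_assoc, trace_mul_comm, ← Matrix.mul_assoc]
  rw [integral_centeredQuadForm_mul hS (by fun_prop)]
  calc ∫ x, fderiv ℝ (fun y ↦ centeredQuadForm S B y * ((v ⬝ᵥ y) * (w ⬝ᵥ y))) x (S *ᵥ A *ᵥ x)
        ∂mvGaussian k S
      = ∫ x, (centeredQuadForm S M x * ((v ⬝ᵥ x) * (w ⬝ᵥ x)) +
            (M * S).trace * ((v ⬝ᵥ x) * (w ⬝ᵥ x))) +
          (centeredQuadForm S B x * (((v ᵥ* (S * A)) ⬝ᵥ x) * (w ⬝ᵥ x)) +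
            centeredQuadForm S B x * ((v ⬝ᵥ x) * ((w ᵥ* (S * A)) ⬝ᵥ x))) ∂mvGaussian k S := by
        congr! 2 with x
        rw [fderiv_mul_apply (differentiable_centeredQuadForm S B x) (by fun_prop), mulVec_mulVec,
          fderiv_centeredQuadForm_mulVec, fderiv_dotProduct_mul_dotProduct, dotProduct_mulVec,
          dotProduct_mulVec]
        ring
    _ = (v ⬝ᵥ (S * (M + Mᵀ) * S) *ᵥ w + (M * S).trace * (v ⬝ᵥ S *ᵥ w)) +
          ((v ᵥ* (S * A)) ⬝ᵥ (S * (B + Bᵀ) * S) *ᵥ w +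
            v ⬝ᵥ (S * (B + Bᵀ) * S) *ᵥ (w ᵥ* (S * A))) := by
        rw [integral_add, integral_add, integral_add, integral_const_mul,
          integral_dotProduct_mul_dotProduct_mvGaussian hS]
        · simp only [integral_centeredQuadForm_mul_dotProduct_mul_dotProduct hS]
        all_goals exact integrable_of_hasTemperateGrowth (by fun_prop)
    _ = _ := by
        rw [← dotProduct_mulVec, ← mulVec_transpose, trace_eq]
        simp only [M, transpose_mul, transpose_add, transpose_transpose, transpose_eq,
          Matrix.mul_add, Matrix.add_mul, add_mulVec, mulVec_add, dotProduct_add, mulVec_mulVec,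
          Matrix.mul_assoc]
        ring

end Moments

theorem stmt2_general {k : ℕ} {Ω : Type*} [MeasurableSpace Ω] {P : Measure Ω}
    {S : Matrix (Fin k) (Fin k) ℝ} (hS : S.PosDef) (A₁ A₂ : Matrix (Fin k) (Fin k) ℝ)
    {u : Ω → Fin k → ℝ} (hu : HasLaw u (mvGaussian k S) P) (a b : Fin k) :
    ∫ ω, u ω a * (((u ω ⬝ᵥ (A₁ *ᵥ u ω)) - ∫ ω', u ω' ⬝ᵥ (A₁ *ᵥ u ω') ∂P) *
        ((u ω ⬝ᵥ (A₂ *ᵥ u ω)) - ∫ ω', u ω' ⬝ᵥ (A₂ *ᵥ u ω') ∂P)) * u ω b ∂P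
      = (A₁ * S * (A₂ + A₂ᵀ) * S).trace * S a b
        + (S * (A₁ + A₁ᵀ) * S * (A₂ + A₂ᵀ) * S) a b
        + (S * (A₂ + A₂ᵀ) * S * (A₁ + A₁ᵀ) * S) a b := by
  have := isGaussian_mvGaussian hS
  have expectation (A : Matrix (Fin k) (Fin k) ℝ) :
      ∫ ω, u ω ⬝ᵥ A *ᵥ u ω ∂P = (A * S).trace := by
    rw [← integral_quadForm_mvGaussian hS,
      ← hu.integral_comp (integrable_of_hasTemperateGrowth (by fun_prop)).aestronglyMeasurable]
    rfl
  have moment := integral_centeredQuadForm_mul_centeredQuadForm_mul_dotProduct_mul_dotProduct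
    hS A₁ A₂ (Pi.single a 1) (Pi.single b 1)
  rw [← hu.integral_comp (integrable_of_hasTemperateGrowth (by fun_prop)).aestronglyMeasurable]
    at moment
  simp only [single_one_dotProduct, mulVec_single_one, col_apply, Matrix.add_apply] at moment
  rw [add_assoc]
  refine .trans ?_ moment
  simp only [expectation]
  congr! 2 with ω
  simp only [Function.comp_apply, centeredQuadForm]
  ring

/-- If `u ~ N(0, Σ)` with `Σ` positive definite and `A₁, A₂` are symmetric, then
`E[u (u′A₁u − E u′A₁u)(u′A₂u − E u′A₂u) u′] = 2 tr(A₁ΣA₂Σ) Σ + 4 ΣA₁ΣA₂Σ + 4 ΣA₂ΣA₁Σ`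
entrywise. -/
theorem stmt2 {k : ℕ} {Ω : Type*} [MeasurableSpace Ω] (P : Measure Ω)
    [IsProbabilityMeasure P]
    (S A₁ A₂ : Matrix (Fin k) (Fin k) ℝ) (hS : S.PosDef)
    (hA₁ : A₁.IsSymm) (hA₂ : A₂.IsSymm)
    (u : Ω → Fin k → ℝ) (hu : Measurable u)
    (hlaw : P.map u = mvGaussian k S) (a b : Fin k) :
    ∫ ω, u ω a * (((u ω ⬝ᵥ (A₁ *ᵥ u ω)) - ∫ ω', u ω' ⬝ᵥ (A₁ *ᵥ u ω') ∂P) *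
        ((u ω ⬝ᵥ (A₂ *ᵥ u ω)) - ∫ ω', u ω' ⬝ᵥ (A₂ *ᵥ u ω') ∂P)) * u ω b ∂P
      = 2 * (A₁ * S * A₂ * S).trace * S a b
        + 4 * (S * A₁ * S * A₂ * S) a b + 4 * (S * A₂ * S * A₁ * S) a b := by
  rw [stmt2_general hS A₁ A₂ ⟨hu.aemeasurable, hlaw⟩, hA₁.eq, hA₂.eq]
  simp only [← two_smul ℝ, Matrix.mul_smul, Matrix.smul_mul, trace_smul, Matrix.smul_apply,
    smul_eq_mul]
  ring
end

section
/- Let u be a k-dimensional random vector with the multivariate normal distribution N(0, Σ), where Σ is a k×k positive definite real matrix. For j = 1, …, s let λⱼ be nonrandom vectors in ℝᵏ and Aⱼ be k×k symmetric real matrices, and set wⱼ = λⱼ′u, Wⱼ = u′Aⱼu, w = (w₁, …, w_s)′, W = (W₁, …, W_s)′. Then E[(w′(W − E[W]))²] = tr(Σ_w Σ_W) + 4 ∑_{j=1}^{s} ∑_{l=1}^{s} λⱼ′ Σ (Aⱼ Σ A_l + A_l Σ Aⱼ) Σ λ_l, where Σ_w is the s×s covariance matrix of w, with (j,l) entry λⱼ′Σλ_l,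 and Σ_W is the s×s covariance matrix of W, with (j,l) entry 2 tr(AⱼΣA_lΣ). -/
open MeasureTheory Matrix Real

/-!
Stein's identity `E[(a′u) p(u)] = E[(∂_{Σa} p)(u)]` for polynomials `p` is integration by parts
against the density `exp (-x′Σ⁻¹x / 2)`. Together with `E[1] = 1` it determines every moment by
recursion on the degree, so the expectations `E[a′u · V · b′u · W]`, for centred quadratic forms
`V` and `W`, become algebra in the polynomial ring: centring does not change derivatives, and each
application of the identity removes a linear factor and differentiates one of the others.
-/

open MvPolynomial

section PolynomialForms

variable {ι R : Type*} [Fintype ι]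

section CommSemiring

variable [CommSemiring R]

/-- The linear form `x ↦ a′x` as a polynomial, linear in its coefficient vector `a`. -/
noncomputable def linearPoly : (ι → R) →ₗ[R] MvPolynomial ι R :=
  Fintype.linearCombination R X

/-- The quadratic form `x ↦ x′Ax` as a polynomial; `A` need not be symmetric. -/
noncomputable def quadraticPoly (A : Matrix ι ι R) : MvPolynomial ι R :=
  ∑ i, X i * linearPoly (A i)

/-- The derivative `∂ᵥ` of polynomials in the constant direction `v`. -/
noncomputable def dirDerivation {ι : Type*} (v : ι → R) :
    Derivation R (MvPolynomial ι R) (MvPolynomial ι R) :=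
  mkDerivation R fun i => C (v i)

lemma linearPoly_apply (a : ι → R) : linearPoly a = ∑ i, C (a i) * X i := by
  simp only [linearPoly, Fintype.linearCombination_apply, C_mul']

lemma linearPoly_single [DecidableEq ι] (i : ι) :
    linearPoly (Pi.single i (1 : R)) = X i := by
  rw [linearPoly, Fintype.linearCombination_apply_single, one_smul]

lemma eval_linearPoly (x a : ι → R) : eval x (linearPoly a) = a ⬝ᵥ x := by
  simp [linearPoly_apply, dotProduct]

lemma eval_quadraticPoly (x : ι → R) (A : Matrix ι ι R) :
    eval x (quadraticPoly A) = x ⬝ᵥ (A *ᵥ x) := by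
  simp [quadraticPoly, eval_linearPoly, dotProduct, mulVec]

lemma dirDerivation_X {ι : Type*} (v : ι → R) (i : ι) : dirDerivation v (X i) = C (v i) :=
  mkDerivation_X R _ i

lemma dirDerivation_linearPoly (v a : ι → R) :
    dirDerivation v (linearPoly a) = C (a ⬝ᵥ v) := by
  simp [linearPoly_apply, dirDerivation_X, dotProduct]

lemma dirDerivation_quadraticPoly (v : ι → R) (A : Matrix ι ι R) :
    dirDerivation v (quadraticPoly A) = linearPoly ((A + Aᵀ) *ᵥ v) := by
  have h_row : ∑ i, X i * C (A i ⬝ᵥ v) = linearPoly (A *ᵥ v) := by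
    simp only [linearPoly_apply, mulVec, mul_comm]
  have h_col : ∑ i, linearPoly (A i) * C (v i) = linearPoly (Aᵀ *ᵥ v) := by
    simp only [mul_comm _ (C _), C_mul', ← map_smul, ← map_sum, mulVec_eq_sum, transpose_transpose,
      op_smul_eq_smul]
  simp only [quadraticPoly, map_sum, Derivation.leibniz, dirDerivation_X, dirDerivation_linearPoly,
    smul_eq_mul, Finset.sum_add_distrib, h_row, h_col, ← map_add, ← add_mulVec]

end CommSemiring

variable [CommRing R]

/-- Stein's identity for a normalised linear functional `E` on polynomials. It characterises
`p ↦ E[p(u)]` for `u ∼ N(0, S)`. -/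
structure IsGaussianFunctional (S : Matrix ι ι R) (E : MvPolynomial ι R →ₗ[R] R) : Prop where
  map_one : E 1 = 1
  map_linearPoly_mul (a : ι → R) (p : MvPolynomial ι R) :
    E (linearPoly a * p) = E (dirDerivation (S *ᵥ a) p)

/-- The polynomial `p` minus its expectation under the functional `E`. -/
noncomputable def centered {ι : Type*} (E : MvPolynomial ι R →ₗ[R] R) (p : MvPolynomial ι R) :
    MvPolynomial ι R :=
  p - C (E p)

lemma dirDerivation_centered {ι : Type*} (E : MvPolynomial ι R →ₗ[R] R) (v : ι → R)
    (p : MvPolynomial ι R) :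
    dirDerivation v (centered E p) = dirDerivation v p := by
  rw [centered, map_sub, derivation_C, sub_zero]

lemma map_C_mul {ι : Type*} (E : MvPolynomial ι R →ₗ[R] R) (c : R) (p : MvPolynomial ι R) :
    E (C c * p) = c * E p := by
  rw [C_mul', map_smul, smul_eq_mul]

namespace IsGaussianFunctional

variable {S : Matrix ι ι R} {E : MvPolynomial ι R →ₗ[R] R}

lemma map_C (hE : IsGaussianFunctional S E) (c : R) : E (C c) = c := by
  rw [← mul_one (C c), map_C_mul, hE.map_one, mul_one]

lemma map_centered (hE : IsGaussianFunctional S E) (p : MvPolynomial ι R) :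
    E (centered E p) = 0 := by
  rw [centered, map_sub, hE.map_C, sub_self]

lemma map_linearPoly_mul_linearPoly (hE : IsGaussianFunctional S E) (a b : ι → R) :
    E (linearPoly a * linearPoly b) = a ⬝ᵥ (S *ᵥ b) := by
  rw [mul_comm, hE.map_linearPoly_mul, dirDerivation_linearPoly, hE.map_C]

lemma map_linearPoly_mul_linearPoly_mul_centered
    (hE : IsGaussianFunctional S E) (a b : ι → R) (B : Matrix ι ι R) :
    E (linearPoly a * (linearPoly b * centered E (quadraticPoly B)))
      = a ⬝ᵥ ((S * (B + Bᵀ) * S) *ᵥ b) := by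
  rw [mul_left_comm, hE.map_linearPoly_mul, Derivation.leibniz, dirDerivation_linearPoly,
    dirDerivation_centered, dirDerivation_quadraticPoly, smul_eq_mul, smul_eq_mul, map_add,
    mul_comm _ (C _), map_C_mul, hE.map_centered, mul_zero, add_zero,
    hE.map_linearPoly_mul_linearPoly]
  simp only [mulVec_mulVec, Matrix.mul_assoc]

lemma map_centered_mul_centered (hE : IsGaussianFunctional S E) (A B : Matrix ι ι R) :
    E (centered E (quadraticPoly A) * centered E (quadraticPoly B))
      = (A * S * (B + Bᵀ) * S).trace := by
  classical
  set V := centered E (quadraticPoly B)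
  have h_diag (i : ι) : E (X i * linearPoly (A i) * V) = (A * (S * (B + Bᵀ) * S)) i i := by
    rw [mul_comm (X i), mul_assoc, ← linearPoly_single,
      hE.map_linearPoly_mul_linearPoly_mul_centered, mulVec_single_one, mul_apply_eq_vecMul]
    rfl
  rw [centered, sub_mul, map_sub, map_C_mul, hE.map_centered, mul_zero, sub_zero, quadraticPoly,
    Finset.sum_mul, map_sum, trace]
  simp only [h_diag, diag_apply, Matrix.mul_assoc]

lemma map_linearPoly_mul_centered_mul_linearPoly_mul_centered
    (hE : IsGaussianFunctional S E) (a b : ι → R) (A B : Matrix ι ι R) :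
    E ((linearPoly a * centered E (quadraticPoly A)) *
        (linearPoly b * centered E (quadraticPoly B)))
      = (a ⬝ᵥ (S *ᵥ b)) * (B * S * (A + Aᵀ) * S).trace
        + a ⬝ᵥ ((S * ((A + Aᵀ) * S * (B + Bᵀ) + (B + Bᵀ) * S * (A + Aᵀ)) * S) *ᵥ b) := by
  set V := centered E (quadraticPoly A)
  set W := centered E (quadraticPoly B)
  have h_deriv : dirDerivation (S *ᵥ b) (linearPoly a * (W * V))
      = C (a ⬝ᵥ (S *ᵥ b)) * (W * V)
        + linearPoly a * (linearPoly ((B + Bᵀ) *ᵥ (S *ᵥ b)) * V)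
        + linearPoly a * (linearPoly ((A + Aᵀ) *ᵥ (S *ᵥ b)) * W) := by
    simp only [Derivation.leibniz, dirDerivation_linearPoly, V, W, dirDerivation_centered,
      dirDerivation_quadraticPoly, smul_eq_mul]
    ring
  calc E ((linearPoly a * V) * (linearPoly b * W))
      = E (linearPoly b * (linearPoly a * (W * V))) := by congr 1; ring
    _ = (a ⬝ᵥ (S *ᵥ b)) * (B * S * (A + Aᵀ) * S).trace
          + a ⬝ᵥ ((S * (A + Aᵀ) * S) *ᵥ ((B + Bᵀ) *ᵥ (S *ᵥ b)))
          + a ⬝ᵥ ((S * (B + Bᵀ) * S) *ᵥ ((A + Aᵀ) *ᵥ (S *ᵥ b))) := by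
      rw [hE.map_linearPoly_mul, h_deriv, map_add, map_add, map_C_mul,
        hE.map_centered_mul_centered, hE.map_linearPoly_mul_linearPoly_mul_centered,
        hE.map_linearPoly_mul_linearPoly_mul_centered]
    _ = _ := by
      generalize A + Aᵀ = Asym, B + Bᵀ = Bsym
      simp only [mulVec_mulVec, mul_add, add_mul, add_mulVec, dotProduct_add, add_assoc,
        Matrix.mul_assoc]

theorem map_sum_linearPoly_mul_centered_sq (hE : IsGaussianFunctional S E) {κ : Type*} [Fintype κ]
    (lam : κ → ι → R) (A : κ → Matrix ι ι R) (hA : ∀ j, (A j).IsSymm) :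
    E ((∑ j, linearPoly (lam j) * centered E (quadraticPoly (A j))) ^ 2)
      = ((Matrix.of fun j l => lam j ⬝ᵥ (S *ᵥ lam l)) *
          (Matrix.of fun j l => 2 * (A j * S * A l * S).trace)).trace
        + 4 * ∑ j, ∑ l, lam j ⬝ᵥ ((S * (A j * S * A l + A l * S * A j) * S) *ᵥ lam l) := by
  have h_two (j : κ) : A j + (A j)ᵀ = (2 : R) • A j := by rw [hA j, two_smul]
  have h_pair (j l : κ) :
      E ((linearPoly (lam j) * centered E (quadraticPoly (A j))) *
          (linearPoly (lam l) * centered E (quadraticPoly (A l))))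
        = (lam j ⬝ᵥ (S *ᵥ lam l)) * (2 * (A l * S * A j * S).trace)
          + 4 * (lam j ⬝ᵥ ((S * (A j * S * A l + A l * S * A j) * S) *ᵥ lam l)) := by
    rw [hE.map_linearPoly_mul_centered_mul_linearPoly_mul_centered, h_two, h_two]
    simp only [Matrix.smul_mul, Matrix.mul_smul, trace_smul, smul_smul, ← smul_add, smul_mulVec,
      dotProduct_smul, smul_eq_mul]
    norm_num
  rw [sq, Finset.sum_mul_sum]
  simp only [map_sum, h_pair, Finset.sum_add_distrib]
  simp only [← Finset.mul_sum]
  rfl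

end IsGaussianFunctional

end PolynomialForms

section RandomVectors

variable {ι Ω : Type*} [MeasurableSpace Ω]

/-- The expectation `p ↦ E[p(u)]` as a linear functional on polynomials, for a random vector `u`
all of whose moments exist. -/
noncomputable def momentFunctional (u : Ω → ι → ℝ) (P : Measure Ω)
    (h : ∀ p, Integrable (fun ω => eval (u ω) p) P) : MvPolynomial ι ℝ →ₗ[ℝ] ℝ where
  toFun p := ∫ ω, eval (u ω) p ∂P
  map_add' p q := by simpa only [map_add] using integral_add (h p) (h q)
  map_smul' c p := by
    simpa only [smul_eval, RingHom.id_apply, smul_eq_mul] using integral_const_mul c _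

/-- All moments of the random vector `u` exist and are those of `N(0, S)`. The matrix `S` may be
singular. -/
structure HasGaussianMoments [Fintype ι] (u : Ω → ι → ℝ) (S : Matrix ι ι ℝ) (P : Measure Ω) :
    Prop where
  integrable (p : MvPolynomial ι ℝ) : Integrable (fun ω => eval (u ω) p) P
  isGaussianFunctional : IsGaussianFunctional S (momentFunctional u P integrable)

end RandomVectors

section GaussianWeight

variable {ι : Type*} [Fintype ι]

/-- The unnormalised density `exp (-x′Qx / 2)` of the centred normal distribution with precision
matrix `Q`. -/
noncomputable def gaussianWeight (Q : Matrix ι ι ℝ) (x : ι → ℝ) : ℝ :=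
  exp (-(x ⬝ᵥ (Q *ᵥ x)) / 2)

lemma gaussianWeight_pos (Q : Matrix ι ι ℝ) (x : ι → ℝ) : 0 < gaussianWeight Q x :=
  exp_pos _

lemma continuous_gaussianWeight (Q : Matrix ι ι ℝ) : Continuous (gaussianWeight Q) := by
  unfold gaussianWeight
  fun_prop

lemma measurable_ofReal_gaussianWeight (Q : Matrix ι ι ℝ) :
    Measurable fun x => ENNReal.ofReal (gaussianWeight Q x) :=
  (continuous_gaussianWeight Q).measurable.ennreal_ofReal

open scoped MatrixOrder in
lemma exists_pos_mul_sum_sq_le_of_posDef {Q : Matrix ι ι ℝ} (hQ : Q.PosDef) :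
    ∃ c > 0, ∀ x : ι → ℝ, c * ∑ i, x i ^ 2 ≤ x ⬝ᵥ (Q *ᵥ x) := by
  classical
  cases isEmpty_or_nonempty ι
  · exact ⟨1, one_pos, by simp⟩
  obtain ⟨c, hc, hcQ⟩ := (CFC.exists_pos_algebraMap_le_iff hQ.isHermitian.isSelfAdjoint).2
    fun _ => hQ.isStrictlyPositive.spectrum_pos
  refine ⟨c, hc, fun x => ?_⟩
  have h_nonneg : 0 ≤ x ⬝ᵥ ((Q - algebraMap ℝ _ c) *ᵥ x) := by
    simpa using (Matrix.le_iff.1 hcQ).dotProduct_mulVec_nonneg x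
  have h_scalar : x ⬝ᵥ (algebraMap ℝ (Matrix ι ι ℝ) c *ᵥ x) = c * ∑ i, x i ^ 2 := by
    rw [Algebra.algebraMap_eq_smul_one, smul_mulVec, one_mulVec, dotProduct_smul, smul_eq_mul]
    simp only [dotProduct, sq]
  rwa [sub_mulVec, dotProduct_sub, h_scalar, sub_nonneg] at h_nonneg

lemma integrable_eval_mul_gaussianWeight {Q : Matrix ι ι ℝ} (hQ : Q.PosDef)
    (p : MvPolynomial ι ℝ) :
    Integrable fun x : ι → ℝ => eval x p * gaussianWeight Q x := by
  obtain ⟨c, hc, h_bound⟩ := exists_pos_mul_sum_sq_le_of_posDef hQ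
  induction p using MvPolynomial.induction_on' with
  | monomial m r =>
    have h_coord (i : ι) : Integrable fun t : ℝ => t ^ m i * exp (-(c / 2) * t ^ 2) := by
      simpa using integrable_rpow_mul_exp_neg_mul_sq (half_pos hc)
        (neg_one_lt_zero.trans_le (m i).cast_nonneg)
    have h_prod : Integrable fun x : ι → ℝ =>
        r * ∏ i, (x i ^ m i * exp (-(c / 2) * x i ^ 2)) :=
      (Integrable.fintype_prod h_coord).const_mul r
    have h_cont := (MvPolynomial.continuous_eval (monomial m r)).mul (continuous_gaussianWeight Q)
    refine h_prod.mono h_cont.aestronglyMeasurable (.of_forall fun x => ?_)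
    have h_exp : gaussianWeight Q x ≤ exp (∑ i, -(c / 2) * x i ^ 2) := by
      rw [gaussianWeight, exp_le_exp, ← Finset.mul_sum]
      linarith [h_bound x]
    rw [Finset.prod_mul_distrib, ← exp_sum, eval_monomial, Finsupp.prod_fintype _ _ (by simp),
      ← mul_assoc, norm_mul, norm_mul (_ * _), norm_of_nonneg (exp_nonneg _),
      norm_of_nonneg (gaussianWeight_pos Q x).le]
    gcongr
  | add p q hp hq => simpa only [map_add, add_mul] using hp.fun_add hq

lemma hasLineDerivAt_eval {ι 𝕜 : Type*} [NontriviallyNormedField 𝕜] (v x : ι → 𝕜)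
    (p : MvPolynomial ι 𝕜) :
    HasLineDerivAt 𝕜 (fun y => eval y p) (eval x (dirDerivation v p)) x v := by
  induction p using MvPolynomial.induction_on with
  | C a => simpa [HasLineDerivAt, derivation_C] using hasDerivAt_const (0 : 𝕜) a
  | add p q hp hq => simpa only [HasLineDerivAt, map_add] using HasDerivAt.fun_add hp hq
  | mul_X p i hp =>
    have h_coord : HasDerivAt (fun t : 𝕜 => x i + t * v i) (v i) 0 := by
      simpa using ((hasDerivAt_id (0 : 𝕜)).mul_const (v i)).const_add (x i)
    simpa [HasLineDerivAt, Derivation.leibniz, dirDerivation_X, add_comm, mul_comm, Pi.mul_def]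
      using HasDerivAt.mul hp h_coord

lemma hasLineDerivAt_gaussianWeight {Q : Matrix ι ι ℝ} (hQ : Q.IsSymm) (v x : ι → ℝ) :
    HasLineDerivAt ℝ (gaussianWeight Q)
      (-((Q *ᵥ v) ⬝ᵥ x) * gaussianWeight Q x) x v := by
  have h_quad := hasLineDerivAt_eval v x (quadraticPoly Q)
  simp only [dirDerivation_quadraticPoly, eval_quadraticPoly, eval_linearPoly, hQ.eq] at h_quad
  refine ((HasDerivAt.fun_neg h_quad).div_const 2).exp.congr_deriv ?_
  simp only [gaussianWeight, zero_smul, add_zero, add_mulVec, add_dotProduct]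
  ring

lemma integral_linearPoly_mul_mul_gaussianWeight {Q : Matrix ι ι ℝ} (hQ : Q.PosDef) (v : ι → ℝ)
    (p : MvPolynomial ι ℝ) :
    ∫ x, eval x (linearPoly (Q *ᵥ v) * p) * gaussianWeight Q x
      = ∫ x, eval x (dirDerivation v p) * gaussianWeight Q x := by
  have h_swap (x : ι → ℝ) :
      eval x p * (-((Q *ᵥ v) ⬝ᵥ x) * gaussianWeight Q x)
        = -(eval x (linearPoly (Q *ᵥ v) * p) * gaussianWeight Q x) := by
    rw [map_mul, eval_linearPoly]
    ring
  have h_parts := integral_bilinear_hasLineDerivAt_right_eq_neg_left_of_integrable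
    (μ := volume) (B := ContinuousLinearMap.mul ℝ ℝ)
    (integrable_eval_mul_gaussianWeight hQ (dirDerivation v p))
    (by simpa only [ContinuousLinearMap.mul_apply', h_swap] using
      (integrable_eval_mul_gaussianWeight hQ (linearPoly (Q *ᵥ v) * p)).fun_neg)
    (integrable_eval_mul_gaussianWeight hQ p)
    (fun x _ => hasLineDerivAt_eval v x p)
    (fun x _ => hasLineDerivAt_gaussianWeight (by simpa using hQ.isHermitian) v x)
  simpa only [ContinuousLinearMap.mul_apply', h_swap, integral_neg, neg_inj] using h_parts

end GaussianWeight

section MvGaussian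

variable {k : ℕ} {S : Matrix (Fin k) (Fin k) ℝ}

lemma mvGaussian_eq_smul (hS : 0 ≤ S.det) :
    mvGaussian k S =
      ENNReal.ofReal ((2 * π) ^ (-(k : ℝ) / 2) * S.det ^ (-(1 : ℝ) / 2)) •
        volume.withDensity fun x => ENNReal.ofReal (gaussianWeight S⁻¹ x) := by
  rw [mvGaussian, ← withDensity_smul _ (measurable_ofReal_gaussianWeight _)]
  congr with x
  rw [ENNReal.ofReal_mul (by positivity), Pi.smul_apply, smul_eq_mul, gaussianWeight]

lemma integral_mvGaussian (hS : 0 ≤ S.det) (f : (Fin k → ℝ) → ℝ) :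
    ∫ x, f x ∂mvGaussian k S =
      (2 * π) ^ (-(k : ℝ) / 2) * S.det ^ (-(1 : ℝ) / 2) *
        ∫ x, f x * gaussianWeight S⁻¹ x := by
  rw [mvGaussian_eq_smul hS, integral_smul_measure, ENNReal.toReal_ofReal (by positivity),
    integral_withDensity_eq_integral_toReal_smul (measurable_ofReal_gaussianWeight _)
      (.of_forall fun _ => ENNReal.ofReal_lt_top), smul_eq_mul]
  simp only [ENNReal.toReal_ofReal (gaussianWeight_pos _ _).le, smul_eq_mul,
    mul_comm (gaussianWeight _ _)]

lemma integrable_mvGaussian_iff (hS : 0 < S.det) {f : (Fin k → ℝ) → ℝ} :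
    Integrable f (mvGaussian k S) ↔
      Integrable fun x => f x * gaussianWeight S⁻¹ x := by
  rw [mvGaussian_eq_smul hS.le,
    integrable_smul_measure (ENNReal.ofReal_pos.2 (by positivity)).ne' ENNReal.ofReal_ne_top,
    integrable_withDensity_iff_integrable_smul' (measurable_ofReal_gaussianWeight _)
      (.of_forall fun _ => ENNReal.ofReal_lt_top)]
  simp only [ENNReal.toReal_ofReal (gaussianWeight_pos _ _).le, smul_eq_mul,
    mul_comm (gaussianWeight _ _)]

lemma integral_linearPoly_mul_mvGaussian (hS : S.PosDef) (a : Fin k → ℝ)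
    (p : MvPolynomial (Fin k) ℝ) :
    ∫ x, eval x (linearPoly a * p) ∂mvGaussian k S =
      ∫ x, eval x (dirDerivation (S *ᵥ a) p) ∂mvGaussian k S := by
  have h_inv : S⁻¹ *ᵥ (S *ᵥ a) = a := by
    rw [mulVec_mulVec, nonsing_inv_mul _ hS.det_pos.ne'.isUnit, one_mulVec]
  have h_stein := integral_linearPoly_mul_mul_gaussianWeight hS.inv (S *ᵥ a) p
  rw [h_inv] at h_stein
  rw [integral_mvGaussian hS.det_pos.le, integral_mvGaussian hS.det_pos.le, h_stein]

theorem HasGaussianMoments.of_map_eq_mvGaussian {Ω : Type*} [MeasurableSpace Ω] {P : Measure Ω}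
    [IsProbabilityMeasure P] (hS : S.PosDef) {u : Ω → Fin k → ℝ} (hu : AEMeasurable u P)
    (hlaw : P.map u = mvGaussian k S) :
    HasGaussianMoments u S P := by
  have h_integrable (p : MvPolynomial (Fin k) ℝ) : Integrable (fun ω => eval (u ω) p) P := by
    refine Integrable.comp_aemeasurable (g := fun x => eval x p) ?_ hu
    rw [hlaw, integrable_mvGaussian_iff hS.det_pos]
    exact integrable_eval_mul_gaussianWeight hS.inv p
  have h_law (p : MvPolynomial (Fin k) ℝ) :
      momentFunctional u P h_integrable p = ∫ x, eval x p ∂mvGaussian k S := by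
    rw [← hlaw, integral_map hu (MvPolynomial.continuous_eval p).aestronglyMeasurable]
    rfl
  refine ⟨h_integrable, ⟨by simp [momentFunctional], fun a p => ?_⟩⟩
  rw [h_law, h_law, integral_linearPoly_mul_mvGaussian hS]

end MvGaussian

theorem stmt3_general {ι κ Ω : Type*} [Fintype ι] [Fintype κ] [MeasurableSpace Ω]
    (P : Measure Ω) (S : Matrix ι ι ℝ) (lam : κ → ι → ℝ)
    (A : κ → Matrix ι ι ℝ) (hA : ∀ j, (A j).IsSymm)
    (u : Ω → ι → ℝ) (hu : HasGaussianMoments u S P) :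
    ∫ ω, (∑ j, (lam j ⬝ᵥ u ω) *
        ((u ω ⬝ᵥ (A j *ᵥ u ω)) - ∫ ω', u ω' ⬝ᵥ (A j *ᵥ u ω') ∂P)) ^ 2 ∂P
      = ((Matrix.of fun j l => lam j ⬝ᵥ (S *ᵥ lam l)) *
          (Matrix.of fun j l => 2 * (A j * S * A l * S).trace)).trace
        + 4 * ∑ j, ∑ l, lam j ⬝ᵥ ((S * (A j * S * A l + A l * S * A j) * S) *ᵥ lam l) := by
  rw [← hu.isGaussianFunctional.map_sum_linearPoly_mul_centered_sq lam A hA]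
  simp only [momentFunctional, LinearMap.coe_mk, AddHom.coe_mk, centered, map_pow, map_sum,
    map_mul, map_sub, eval_linearPoly, eval_quadraticPoly, eval_C]

/-- Lemma 3.1(iv): for `u ~ N(0, Σ)`, linear forms `wⱼ = λⱼ′u` and quadratic forms
`Wⱼ = u′Aⱼu` with `Aⱼ` symmetric,
`E[(w′(W − E W))²] = tr(Σ_w Σ_W) + 4 ∑ⱼ∑ₗ λⱼ′Σ(AⱼΣAₗ + AₗΣAⱼ)Σλₗ`,
where `Σ_w` has entries `λⱼ′Σλₗ` and `Σ_W` has entries `2 tr(AⱼΣAₗΣ)`. -/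
theorem stmt3 {k s : ℕ} {Ω : Type*} [MeasurableSpace Ω] (P : Measure Ω)
    [IsProbabilityMeasure P]
    (S : Matrix (Fin k) (Fin k) ℝ) (hS : S.PosDef)
    (lam : Fin s → (Fin k → ℝ))
    (A : Fin s → Matrix (Fin k) (Fin k) ℝ) (hA : ∀ j, (A j).IsSymm)
    (u : Ω → Fin k → ℝ) (hu : Measurable u)
    (hlaw : P.map u = mvGaussian k S)
    (Sw SW : Matrix (Fin s) (Fin s) ℝ)
    (hSw : Sw = Matrix.of fun j l => lam j ⬝ᵥ (S *ᵥ lam l))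
    (hSW : SW = Matrix.of fun j l => 2 * (A j * S * A l * S).trace) :
    ∫ ω, (∑ j, (lam j ⬝ᵥ u ω) *
        ((u ω ⬝ᵥ (A j *ᵥ u ω)) - ∫ ω', u ω' ⬝ᵥ (A j *ᵥ u ω') ∂P)) ^ 2 ∂P
      = (Sw * SW).trace
        + 4 * ∑ j, ∑ l, lam j ⬝ᵥ ((S * (A j * S * A l + A l * S * A j) * S) *ᵥ lam l) := by
  subst hSw hSW
  exact stmt3_general P S lam A hA u (.of_map_eq_mvGaussian hS hu.aemeasurable hlaw)
end

section
/- Fix w ≥ 1 and positive integers n₁, …, n_{w+1}, and let S_{w+1} = {0,1}^{w+1}. For i = (i₁, …, i_{w+1}) ∈ S_{w+1} let K_i = ⊗_{l=1}^{w+1} J_{n_l}^{i_l} (Kronecker product), where J_n^0 = I_n and J_n^1 = J_n is the n×n all-ones matrix; let n = ∏_{l=1}^{w+1} n_l and r_i = ∏_{l : i_l = 0} n_l (so n/r_i = ∏_{l : i_l = 1} n_l). Let S ⊆ S_{w+1}, let σ₀ > 0 and σ_k ≥ 0 for k ∈ S, and set Σ = σ₀ I_n + ∑_{k ∈ S} σ_k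 K_k. Then Σ is invertible and Σ⁻¹ = ∑_{i ∈ S_{w+1}} τ_i K_i, where for each i ∈ S_{w+1}, τ_i = (r_i / n) · ∑_{j ∈ S_{w+1}, j ≤ i} (−1)^{|{l : i_l = 1, j_l = 0}|} / (σ₀ + ∑_{k ∈ S, k ≤ j} σ_k (n / r_k)). Here, for i, j ∈ S_{w+1}, j ≤ i means j_l ≤ i_l for all l = 1, …, w+1, and |·| denotes cardinality of a set of indices l. -/
open Matrix

/-- The Kronecker-product basis matrix `K_i = ⊗_l J_{n_l}^{i_l}`, realized as a matrix
indexed by the product of the factor level sets: its `(a,b)` entry is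
`∏_l J^{i_l}(a_l, b_l)` where `J^1` is the all-ones matrix and `J^0` the identity. -/
noncomputable def Kmat (w : ℕ) (n : Fin (w + 1) → ℕ) (i : Fin (w + 1) → Bool) :
    Matrix ((l : Fin (w + 1)) → Fin (n l)) ((l : Fin (w + 1)) → Fin (n l)) ℝ :=
  Matrix.of fun a b => ∏ l, if i l then (1 : ℝ) else (if a l = b l then 1 else 0)

/-- `r_i = ∏_{l : i_l = 0} n_l`. -/
def rprod (w : ℕ) (n : Fin (w + 1) → ℕ) (i : Fin (w + 1) → Bool) : ℕ :=
  ∏ l ∈ Finset.univ.filter (fun l => i l = false), n l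

/-- `n = ∏_l n_l`. -/
def Ntot (w : ℕ) (n : Fin (w + 1) → ℕ) : ℕ := ∏ l, n l

/-- The coefficient `τ_i` of `K_i` in the expansion of `Σ⁻¹` (Lemma 3.2). -/
noncomputable def tau (w : ℕ) (n : Fin (w + 1) → ℕ) (S : Finset (Fin (w + 1) → Bool))
    (σ₀ : ℝ) (σ : (Fin (w + 1) → Bool) → ℝ) (i : Fin (w + 1) → Bool) : ℝ :=
  ((rprod w n i : ℝ) / (Ntot w n : ℝ)) *
    ∑ j ∈ Finset.univ.filter (fun j : Fin (w + 1) → Bool => ∀ l, j l ≤ i l),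
      ((-1 : ℝ) ^ (Finset.univ.filter (fun l => i l = true ∧ j l = false)).card /
        (σ₀ + ∑ k ∈ S.filter (fun k => ∀ l, k l ≤ j l),
          σ k * ((Ntot w n : ℝ) / (rprod w n k : ℝ))))

/-!
On each factor, `J / n` and `I - J / n` are complementary idempotents, on which the all-ones matrix
`J` acts as `n` and `0`. Their Kronecker products `E_j` therefore sum to the identity, and
`Σ E_j = θ_j E_j` with `θ_j = σ₀ + ∑_{k ∈ S, k ≤ j} σ_k n / r_k`. Hence `Σ⁻¹ = ∑_j θ_j⁻¹ E_j`, and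
expanding every `E_j` in the matrices `K_i` gives the coefficients `τ_i`.
-/

theorem mul_sum_inv_smul_eq_one {κ K A : Type*} [Fintype κ] [Field K] [Semiring A] [Algebra K A]
    {a : A} {E : κ → A} {θ : κ → K} (hE : ∑ j, E j = 1) (hθ : ∀ j, θ j ≠ 0)
    (haE : ∀ j, a * E j = θ j • E j) :
    a * ∑ j, (θ j)⁻¹ • E j = 1 := by
  simp only [Finset.mul_sum, mul_smul_comm, haE, inv_smul_smul₀ (hθ _), hE]

section PiKronecker

variable {ι R : Type*} [Fintype ι] [CommSemiring R] {m p q : ι → Type*}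

/-- The Kronecker product `⊗_l A_l` of a finite family of matrices. Rows and columns are indexed by
dependent functions rather than by iterated pairs, so no order of the factors is chosen. -/
def piKronecker (A : ∀ l, Matrix (m l) (p l) R) : Matrix (∀ l, m l) (∀ l, p l) R :=
  of fun a b => ∏ l, A l (a l) (b l)

theorem piKronecker_smul (c : ι → R) (A : ∀ l, Matrix (m l) (p l) R) :
    piKronecker (fun l => c l • A l) = (∏ l, c l) • piKronecker A := by
  ext a b
  simp only [piKronecker, of_apply, Matrix.smul_apply, smul_eq_mul, Finset.prod_mul_distrib]

theorem piKronecker_one [∀ l, DecidableEq (m l)] :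
    piKronecker (fun l => (1 : Matrix (m l) (m l) R)) = 1 := by
  ext a b
  simp only [piKronecker, of_apply, one_apply, Fintype.prod_ite_zero, Finset.prod_const_one,
    funext_iff]

variable [DecidableEq ι]

theorem piKronecker_mul [∀ l, Fintype (p l)] (A : ∀ l, Matrix (m l) (p l) R)
    (B : ∀ l, Matrix (p l) (q l) R) :
    piKronecker A * piKronecker B = piKronecker fun l => A l * B l := by
  ext a b
  simp only [piKronecker, of_apply, mul_apply, Fintype.prod_sum, Finset.prod_mul_distrib]

theorem piKronecker_sum {κ : ι → Type*} [∀ l, Fintype (κ l)]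
    (A : ∀ l, κ l → Matrix (m l) (p l) R) :
    piKronecker (fun l => ∑ x, A l x) = ∑ f : ∀ l, κ l, piKronecker fun l => A l (f l) := by
  ext a b
  simp only [piKronecker, of_apply, Matrix.sum_apply, Fintype.prod_sum]

end PiKronecker

section Factor

variable (K : Type*) [Field K] (m : Type*) [DecidableEq m]

/-- The power `J^b` of the all-ones matrix `J` for an exponent `b` in `{0, 1}`, encoded by
`Bool`. -/
def onesPow (b : Bool) : Matrix m m K := if b then of fun _ _ => 1 else 1

variable [Fintype m]

/-- The projections diagonalizing `J`: the averaging matrix `J / |m|` for `true` and the centring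
matrix `1 - J / |m|` for `false`. -/
def meanProj (b : Bool) : Matrix m m K :=
  if b then (Fintype.card m : K)⁻¹ • onesPow K m true
  else 1 - (Fintype.card m : K)⁻¹ • onesPow K m true

theorem sum_meanProj : ∑ b, meanProj K m b = 1 := by
  simp [meanProj]

theorem onesPow_true_mul_self :
    onesPow K m true * onesPow K m true = (Fintype.card m : K) • onesPow K m true := by
  ext a b
  simp [onesPow, mul_apply]

variable {K m} in
theorem onesPow_mul_meanProj (hm : (Fintype.card m : K) ≠ 0) (b c : Bool) :
    onesPow K m b * meanProj K m c =
      (if b ≤ c then if b then (Fintype.card m : K) else 1 else 0) • meanProj K m c := by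
  cases b
  · simp [onesPow]
  · cases c <;> simp [meanProj, mul_sub, onesPow_true_mul_self, smul_smul, hm]

theorem meanProj_eq_sum_onesPow (b : Bool) :
    meanProj K m b = ∑ c, (if b ≤ c then
      (if c = true ∧ b = false then -1 else 1) / (if c then (Fintype.card m : K) else 1)
      else 0) • onesPow K m c := by
  cases b <;> simp [meanProj, onesPow, div_eq_mul_inv, sub_eq_neg_add]

end Factor

section Anova

variable {ι : Type*} [Fintype ι] (K : Type*) [Field K] (m : ι → Type*)

/-- The matrix `K_k = ⊗_l J^{k_l}` of an effect `k` of the balanced ANOVA model. -/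
def effectMatrix [∀ l, DecidableEq (m l)] (k : ι → Bool) : Matrix (∀ l, m l) (∀ l, m l) K :=
  piKronecker fun l => onesPow K (m l) (k l)

variable [∀ l, Fintype (m l)]

/-- The number `n / r_k` of observations sharing a level of the effect `k`; it is the nonzero
eigenvalue of `K_k`. -/
def replicates (k : ι → Bool) : ℕ := ∏ l, if k l then Fintype.card (m l) else 1

/-- The Kronecker product `E_j` of averaging matrices (where `j` is `true`) and centring matrices
(where it is `false`), a common eigenprojection of all the `K_k`. -/
def effectProj [∀ l, DecidableEq (m l)] (j : ι → Bool) : Matrix (∀ l, m l) (∀ l, m l) K :=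
  piKronecker fun l => meanProj K (m l) (j l)

variable [∀ l, DecidableEq (m l)] [DecidableEq ι]

theorem sum_effectProj : ∑ j, effectProj K m j = 1 := by
  simp only [effectProj, ← piKronecker_sum, sum_meanProj, piKronecker_one]

variable {K m} in
theorem effectMatrix_mul_effectProj (hm : ∀ l, (Fintype.card (m l) : K) ≠ 0) (k j : ι → Bool) :
    effectMatrix K m k * effectProj K m j =
      (if ∀ l, k l ≤ j l then (replicates m k : K) else 0) • effectProj K m j := by
  simp only [effectMatrix, effectProj, piKronecker_mul, onesPow_mul_meanProj (hm _),
    piKronecker_smul, Fintype.prod_ite_zero, replicates, Nat.cast_prod, Nat.cast_ite, Nat.cast_one]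

theorem effectProj_eq_sum_effectMatrix (j : ι → Bool) :
    effectProj K m j = ∑ i with ∀ l, j l ≤ i l,
      ((-1) ^ (Finset.univ.filter fun l => i l = true ∧ j l = false).card / (replicates m i : K)) •
        effectMatrix K m i := by
  simp only [effectProj, effectMatrix, meanProj_eq_sum_onesPow, piKronecker_sum, piKronecker_smul,
    Fintype.prod_ite_zero, Finset.prod_div_distrib]
  simp only [Finset.sum_filter, ite_smul, zero_smul, ← Finset.prod_filter, Finset.prod_const,
    replicates, Nat.cast_prod]

variable {K} (S : Finset (ι → Bool)) (σ₀ : K) (σ : (ι → Bool) → K)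

/-- The covariance matrix `Σ = σ₀ I + ∑_{k ∈ S} σ_k K_k` of the balanced ANOVA model. -/
def anovaCov : Matrix (∀ l, m l) (∀ l, m l) K := σ₀ • 1 + ∑ k ∈ S, σ k • effectMatrix K m k

/-- The eigenvalue `θ_j` of `Σ` on the range of `E_j`. -/
def anovaEigenvalue (j : ι → Bool) : K :=
  σ₀ + ∑ k ∈ S with ∀ l, k l ≤ j l, σ k * replicates m k

/-- The coefficient `τ_i` of `K_i` in `Σ⁻¹`. -/
def anovaInvCoeff (i : ι → Bool) : K :=
  (∑ j with ∀ l, j l ≤ i l, (-1) ^ (Finset.univ.filter fun l => i l = true ∧ j l = false).card /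
    anovaEigenvalue m S σ₀ σ j) / replicates m i

variable {m} in
theorem anovaCov_mul_effectProj (hm : ∀ l, (Fintype.card (m l) : K) ≠ 0) (j : ι → Bool) :
    anovaCov m S σ₀ σ * effectProj K m j = anovaEigenvalue m S σ₀ σ j • effectProj K m j := by
  simp only [anovaCov, anovaEigenvalue, add_mul, Finset.sum_mul, smul_mul_assoc, one_mul,
    effectMatrix_mul_effectProj hm, smul_smul, ← Finset.sum_smul, ← add_smul, mul_ite, mul_zero,
    Finset.sum_filter]

theorem sum_inv_anovaEigenvalue_smul_effectProj :
    ∑ j, (anovaEigenvalue m S σ₀ σ j)⁻¹ • effectProj K m j =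
      ∑ i, anovaInvCoeff m S σ₀ σ i • effectMatrix K m i := by
  simp only [effectProj_eq_sum_effectMatrix, anovaInvCoeff, Finset.smul_sum, Finset.sum_div,
    Finset.sum_smul, smul_smul]
  rw [Finset.sum_comm' (t' := Finset.univ)
    (s' := fun i => Finset.univ.filter fun j => ∀ l, j l ≤ i l) (by simp)]
  refine Finset.sum_congr rfl fun i _ => Finset.sum_congr rfl fun j _ => ?_
  congr 1
  ring

end Anova

theorem anovaEigenvalue_pos {ι K : Type*} [Fintype ι] [Field K] [LinearOrder K]
    [IsStrictOrderedRing K] {m : ι → Type*} [∀ l, Fintype (m l)] {S : Finset (ι → Bool)} {σ₀ : K}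
    {σ : (ι → Bool) → K} (hσ₀ : 0 < σ₀) (hσ : ∀ k ∈ S, 0 ≤ σ k) (j : ι → Bool) :
    0 < anovaEigenvalue m S σ₀ σ j :=
  add_pos_of_pos_of_nonneg hσ₀ <| Finset.sum_nonneg fun k hk =>
    mul_nonneg (hσ k (Finset.mem_filter.1 hk).1) (Nat.cast_nonneg _)

theorem stmt4_general {ι K : Type*} [Fintype ι] [DecidableEq ι] [Field K] {m : ι → Type*}
    [∀ l, Fintype (m l)] [∀ l, DecidableEq (m l)] (hm : ∀ l, (Fintype.card (m l) : K) ≠ 0)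
    (S : Finset (ι → Bool)) (σ₀ : K) (σ : (ι → Bool) → K)
    (hθ : ∀ j, anovaEigenvalue m S σ₀ σ j ≠ 0) :
    IsUnit (anovaCov m S σ₀ σ) ∧
      (anovaCov m S σ₀ σ)⁻¹ = ∑ i, anovaInvCoeff m S σ₀ σ i • effectMatrix K m i := by
  have right_inv :
      anovaCov m S σ₀ σ * ∑ i, anovaInvCoeff m S σ₀ σ i • effectMatrix K m i = 1 := by
    rw [← sum_inv_anovaEigenvalue_smul_effectProj]
    exact mul_sum_inv_smul_eq_one (sum_effectProj K m) hθ (anovaCov_mul_effectProj S σ₀ σ hm)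
  exact ⟨.of_mul_eq_one _ right_inv, inv_eq_right_inv right_inv⟩

section FinLevels

variable {w : ℕ} {n : Fin (w + 1) → ℕ}

theorem Kmat_eq_effectMatrix (k : Fin (w + 1) → Bool) :
    Kmat w n k = effectMatrix ℝ (fun l => Fin (n l)) k := by
  ext a b
  simp only [Kmat, effectMatrix, piKronecker, onesPow, of_apply]
  refine Finset.prod_congr rfl fun l _ => ?_
  cases k l <;> simp [one_apply]

theorem Ntot_eq_replicates_mul_rprod (k : Fin (w + 1) → Bool) :
    Ntot w n = replicates (fun l => Fin (n l)) k * rprod w n k := by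
  simp only [Ntot, replicates, rprod, Finset.prod_filter, ← Finset.prod_mul_distrib]
  refine Finset.prod_congr rfl fun l _ => ?_
  cases k l <;> simp

theorem Ntot_div_rprod (hn : ∀ l, 0 < n l) (k : Fin (w + 1) → Bool) :
    (Ntot w n / rprod w n k : ℝ) = replicates (fun l => Fin (n l)) k := by
  have rprod_ne_zero : (rprod w n k : ℝ) ≠ 0 :=
    Nat.cast_ne_zero.2 (Finset.prod_pos fun l _ => hn l).ne'
  rw [div_eq_iff rprod_ne_zero, Ntot_eq_replicates_mul_rprod k, Nat.cast_mul]

theorem tau_eq_anovaInvCoeff (hn : ∀ l, 0 < n l) (S : Finset (Fin (w + 1) → Bool)) (σ₀ : ℝ)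
    (σ : (Fin (w + 1) → Bool) → ℝ) (i : Fin (w + 1) → Bool) :
    tau w n S σ₀ σ i = anovaInvCoeff (fun l => Fin (n l)) S σ₀ σ i := by
  simp only [tau, anovaInvCoeff, anovaEigenvalue, Ntot_div_rprod hn]
  rw [← inv_div, Ntot_div_rprod hn, inv_mul_eq_div]
  -- The two sides decide `∀ l, j l ≤ i l` by different instances, generic or for `Fin`.
  congr!

end FinLevels

/-- Lemma 3.2: inversion of the covariance matrix of a balanced mixed ANOVA model.
`Σ = σ₀ I + ∑_{k ∈ S} σ_k K_k` is invertible and `Σ⁻¹ = ∑_{i ∈ S_{w+1}} τ_i K_i`. -/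
theorem stmt4 (w : ℕ) (hw : 1 ≤ w) (n : Fin (w + 1) → ℕ) (hn : ∀ l, 0 < n l)
    (S : Finset (Fin (w + 1) → Bool))
    (σ₀ : ℝ) (hσ₀ : 0 < σ₀)
    (σ : (Fin (w + 1) → Bool) → ℝ) (hσ : ∀ k ∈ S, 0 ≤ σ k)
    (Sig : Matrix ((l : Fin (w + 1)) → Fin (n l)) ((l : Fin (w + 1)) → Fin (n l)) ℝ)
    (hSig : Sig = σ₀ • (1 : Matrix _ _ ℝ) + ∑ k ∈ S, σ k • Kmat w n k) :
    IsUnit Sig ∧ Sig⁻¹ = ∑ i : Fin (w + 1) → Bool, tau w n S σ₀ σ i • Kmat w n i := by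
  simpa only [hSig, anovaCov, Kmat_eq_effectMatrix, tau_eq_anovaInvCoeff hn] using
    stmt4_general (m := fun l => Fin (n l)) (by simpa using fun l => (hn l).ne') S σ₀ σ
      fun j => (anovaEigenvalue_pos hσ₀ hσ j).ne'
end

section
/- For every real g ≥ 2 there exists a constant c, depending only on g, such that for every positive integer n, every n×n symmetric real matrix Q, and ξ an n-dimensional random vector with the standard multivariate normal distribution N(0, I_n), one has E[|ξ′Qξ − E[ξ′Qξ]|^g] ≤ c · (‖Q‖₂)^g, where ‖Q‖₂ = (tr(Q′Q))^{1/2} is the Frobenius norm and E[ξ′Qξ] = tr(Q). -/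
open MeasureTheory Matrix Real

/-!
Replacing `Q` by its symmetric part preserves the quadratic form and, by Pythagoras, does not
increase the Frobenius norm `σ`. For symmetric `Q` with eigenvalues `λ i`, the coordinates `X i` of
`ξ` in an orthonormal eigenbasis are again independent standard normal variables, so the centered
form is `Y = ∑ i, λ i * (X i ^ 2 - 1)`, where `∑ i, λ i ^ 2 = σ ^ 2`.

The moment generating function of `X i ^ 2 - 1` is at most `exp (4 * t ^ 2)` for `|t| ≤ 1 / 4`.
As `|λ i| ≤ σ`, independence bounds that of `Y` at `t = ± 1 / (4 * σ)` by
`exp (4 * σ ^ 2 * t ^ 2) = exp (1 / 4)`, whatever the dimension. The moment bound then follows from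
`|y| ^ g ≤ (g / |t|) ^ g * max (exp (t * y)) (exp (-t * y))`.
-/

open ProbabilityTheory WithLp
open scoped NNReal

section Density

lemma pi_withDensity_ofReal {ι : Type*} [Fintype ι] {E : ι → Type*}
    [∀ i, MeasurableSpace (E i)] {μ : ∀ i, Measure (E i)} [∀ i, SigmaFinite (μ i)]
    {f : ∀ i, E i → ℝ} (hf : ∀ i, Integrable (f i) (μ i)) (hf₀ : ∀ i x, 0 ≤ f i x) :
    Measure.pi (fun i ↦ (μ i).withDensity fun x ↦ ENNReal.ofReal (f i x)) =
      (Measure.pi μ).withDensity fun x ↦ ENNReal.ofReal (∏ i, f i (x i)) := by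
  have (i : ι) : IsFiniteMeasure ((μ i).withDensity fun x ↦ ENNReal.ofReal (f i x)) :=
    isFiniteMeasure_withDensity_ofReal (hf i).2
  refine Measure.pi_eq fun s hs ↦ ?_
  calc (Measure.pi μ).withDensity (fun x ↦ ENNReal.ofReal (∏ i, f i (x i))) (Set.univ.pi s)
    _ = ∫⁻ x, ENNReal.ofReal (∏ i, f i (x i)) ∂Measure.pi fun i ↦ (μ i).restrict (s i) := by
      rw [withDensity_apply _ (.univ_pi hs), Measure.restrict_pi_pi]
    _ = ENNReal.ofReal (∏ i, ∫ x in s i, f i x ∂μ i) := by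
      rw [← ofReal_integral_eq_lintegral_ofReal
        (Integrable.fintype_prod_dep fun i ↦ (hf i).integrableOn)
        (ae_of_all _ fun x ↦ Finset.prod_nonneg fun i _ ↦ hf₀ i (x i)),
        integral_fintype_prod_eq_prod]
    _ = ∏ i, ENNReal.ofReal (∫ x in s i, f i x ∂μ i) :=
      ENNReal.ofReal_prod_of_nonneg fun i _ ↦ integral_nonneg (hf₀ i)
    _ = ∏ i, (μ i).withDensity (fun x ↦ ENNReal.ofReal (f i x)) (s i) := by
      refine Finset.prod_congr rfl fun i _ ↦ ?_
      rw [withDensity_apply _ (hs i), ofReal_integral_eq_lintegral_ofReal (hf i).integrableOn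
        (ae_of_all _ (hf₀ i))]

lemma prod_gaussianPDFReal_zero_one {ι : Type*} [Fintype ι] (x : ι → ℝ) :
    ∏ i, gaussianPDFReal 0 1 (x i) =
      (2 * π) ^ (-(Fintype.card ι : ℝ) / 2) * exp (-(x ⬝ᵥ x) / 2) := by
  have norm_const : (√(2 * π))⁻¹ ^ Fintype.card ι = (2 * π) ^ (-(Fintype.card ι : ℝ) / 2) := by
    rw [sqrt_eq_rpow, ← rpow_neg (by positivity), ← rpow_natCast, ← rpow_mul (by positivity)]
    ring_nf
  simp only [gaussianPDFReal, Finset.prod_mul_distrib, ← exp_sum, sub_zero, NNReal.coe_one,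
    mul_one, Finset.prod_const, Finset.card_univ, norm_const, ← Finset.sum_div,
    Finset.sum_neg_distrib, dotProduct, pow_two]

lemma mvGaussian_one_eq_pi (n : ℕ) :
    mvGaussian n 1 = Measure.pi fun _ : Fin n ↦ gaussianReal 0 1 := by
  have density : gaussianReal 0 1 =
      volume.withDensity fun x ↦ ENNReal.ofReal (gaussianPDFReal 0 1 x) :=
    gaussianReal_of_var_ne_zero 0 one_ne_zero
  rw [density, pi_withDensity_ofReal (fun _ ↦ integrable_gaussianPDFReal 0 1)
    (fun _ ↦ gaussianPDFReal_nonneg 0 1), ← volume_pi, mvGaussian]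
  simp only [prod_gaussianPDFReal_zero_one, Fintype.card_fin, det_one, one_rpow, mul_one, inv_one,
    one_mulVec]

end Density

section ChiSquare

lemma neg_log_one_sub_le {u : ℝ} (hu : |u| ≤ 1 / 2) : -log (1 - u) ≤ u + 2 * u ^ 2 := by
  have taylor : |u + log (1 - u)| ≤ u ^ 2 / (1 - |u|) := by
    simpa using abs_log_sub_add_sum_range_le (hu.trans_lt (by norm_num)) 1
  have remainder : u ^ 2 / (1 - |u|) ≤ 2 * u ^ 2 := by
    rw [div_le_iff₀ (by linarith)]
    nlinarith [sq_nonneg u]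
  linarith [neg_abs_le (u + log (1 - u))]

-- For `1 ≤ 2 * v * t` the integral diverges and both sides take their junk value `0`.
lemma mgf_sq_gaussianReal (v : ℝ≥0) (t : ℝ) :
    mgf (fun x ↦ x ^ 2) (gaussianReal 0 v) t = (√(1 - 2 * v * t))⁻¹ := by
  rcases eq_or_ne v 0 with rfl | hv
  · simp [mgf, gaussianReal_zero_var]
  have hv₀ : (v : ℝ) ≠ 0 := NNReal.coe_ne_zero.2 hv
  have density (x : ℝ) : gaussianPDFReal 0 v x • exp (t * x ^ 2) =
      (√(2 * π * v))⁻¹ * exp (-((1 - 2 * v * t) / (2 * v)) * x ^ 2) := by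
    rw [gaussianPDFReal, smul_eq_mul, mul_assoc, ← exp_add]
    congr 2
    field_simp
    ring
  have normalization : √(π / ((1 - 2 * v * t) / (2 * v))) =
      √(2 * π * v) * (√(1 - 2 * v * t))⁻¹ := by
    rw [← sqrt_inv, ← sqrt_mul (by positivity)]
    congr 1
    rw [div_div_eq_mul_div, div_eq_mul_inv]
    ring
  rw [mgf, integral_gaussianReal_eq_integral_smul hv]
  simp_rw [density]
  rw [integral_const_mul, integral_gaussian, normalization, inv_mul_cancel_left₀ (by positivity)]

lemma mgf_sq_sub_one_gaussianReal {t : ℝ} (ht : t < 1 / 2) :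
    mgf (fun x ↦ x ^ 2 - 1) (gaussianReal 0 1) t = exp (-log (1 - 2 * t) / 2 - t) := by
  have one_sub_pos : 0 < 1 - 2 * t := by linarith
  calc mgf (fun x ↦ x ^ 2 - 1) (gaussianReal 0 1) t
    _ = mgf (fun x ↦ x ^ 2) (gaussianReal 0 1) t * exp (t * -1) := mgf_add_const (-1)
    _ = (√(1 - 2 * t))⁻¹ * exp (-t) := by
      rw [mgf_sq_gaussianReal, NNReal.coe_one, mul_one, mul_neg_one]
    _ = exp (-log (1 - 2 * t) / 2 - t) := by
      rw [sub_eq_add_neg (-log _ / 2), exp_add, neg_div, ← log_sqrt one_sub_pos.le, ← log_inv,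
        exp_log (inv_pos.2 (sqrt_pos.2 one_sub_pos))]

lemma mgf_sq_sub_one_gaussianReal_le {t : ℝ} (ht : |t| ≤ 1 / 4) :
    mgf (fun x ↦ x ^ 2 - 1) (gaussianReal 0 1) t ≤ exp (4 * t ^ 2) := by
  rw [mgf_sq_sub_one_gaussianReal (by linarith [le_abs_self t]), exp_le_exp]
  have : |2 * t| ≤ 1 / 2 := by
    rw [abs_mul, abs_two]
    linarith
  linarith [neg_log_one_sub_le this]

end ChiSquare

section WeightedSum

variable {Ω : Type*} [MeasurableSpace Ω] {P : Measure Ω}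

lemma integral_rpow_abs_le_mgf_add_mgf {X : Ω → ℝ} {t p : ℝ} (ht : t ≠ 0) (hp : 0 ≤ p)
    (hpos : Integrable (fun ω ↦ exp (t * X ω)) P) (hneg : Integrable (fun ω ↦ exp (-t * X ω)) P) :
    ∫ ω, |X ω| ^ p ∂P ≤ (p / |t|) ^ p * (mgf X P t + mgf X P (-t)) := by
  rw [mgf, mgf, ← integral_add hpos hneg, ← integral_const_mul]
  refine integral_mono (integrable_rpow_abs_of_integrable_exp_mul ht hpos hneg hp)
    ((hpos.add hneg).const_mul _) fun ω ↦ (rpow_abs_le_mul_max_exp (X ω) hp ht).trans ?_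
  gcongr
  exact max_le_add_of_nonneg (exp_pos _).le (exp_pos _).le

lemma integrable_sq_of_hasLaw_gaussianReal {X : Ω → ℝ} {m : ℝ} {v : ℝ≥0}
    (hX : HasLaw X (gaussianReal m v) P) : Integrable (fun ω ↦ X ω ^ 2) P := by
  have h : MemLp id 2 (P.map X) := hX.map_eq ▸ memLp_id_gaussianReal 2
  exact ((memLp_map_measure_iff h.1 hX.aemeasurable).1 h).integrable_sq

lemma integral_sq_of_hasLaw_gaussianReal {X : Ω → ℝ} {v : ℝ≥0}
    (hX : HasLaw X (gaussianReal 0 v) P) : ∫ ω, X ω ^ 2 ∂P = v := by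
  have mean : ∫ ω, X ω ∂P = 0 := by rw [hX.integral_eq, integral_id_gaussianReal]
  rw [← variance_of_integral_eq_zero hX.aemeasurable mean, hX.variance_eq, variance_id_gaussianReal]

variable {ι : Type*} [Fintype ι] {X : ι → Ω → ℝ}

lemma integral_sum_mul_sq (hX : ∀ i, HasLaw (X i) (gaussianReal 0 1) P) (a : ι → ℝ) :
    ∫ ω, ∑ i, a i * X i ω ^ 2 ∂P = ∑ i, a i := by
  rw [integral_finsetSum _ fun i _ ↦ (integrable_sq_of_hasLaw_gaussianReal (hX i)).const_mul _]
  simp only [integral_const_mul, integral_sq_of_hasLaw_gaussianReal (hX _), NNReal.coe_one, mul_one]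

lemma mgf_sum_mul_sq_sub_one (hX : ∀ i, HasLaw (X i) (gaussianReal 0 1) P) (hind : iIndepFun X P)
    (a : ι → ℝ) (t : ℝ) :
    mgf (fun ω ↦ ∑ i, a i * (X i ω ^ 2 - 1)) P t =
      ∏ i, mgf (fun x ↦ x ^ 2 - 1) (gaussianReal 0 1) (a i * t) := by
  have hmeas (i : ι) : AEMeasurable (X i) P := (hX i).aemeasurable
  have hind' : iIndepFun (fun i ω ↦ a i * (X i ω ^ 2 - 1)) P :=
    hind.comp (fun i x ↦ a i * (x ^ 2 - 1)) fun i ↦ by fun_prop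
  calc mgf (fun ω ↦ ∑ i, a i * (X i ω ^ 2 - 1)) P t
    _ = mgf (∑ i, fun ω ↦ a i * (X i ω ^ 2 - 1)) P t := by rw [Finset.sum_fn]
    _ = ∏ i, mgf (fun ω ↦ a i * (X i ω ^ 2 - 1)) P t := hind'.mgf_sum₀ (by fun_prop) _
    _ = ∏ i, mgf (fun x ↦ x ^ 2 - 1) (gaussianReal 0 1) (a i * t) := by
      refine Finset.prod_congr rfl fun i _ ↦ ?_
      rw [mgf_const_mul, ← (hX i).map_eq, mgf_map (hmeas i) (by fun_prop)]
      rfl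

lemma integrable_exp_mul_sum_mul_sq_sub_one (hX : ∀ i, HasLaw (X i) (gaussianReal 0 1) P)
    (hind : iIndepFun X P) {a : ι → ℝ} {t : ℝ} (ht : ∀ i, a i * t < 1 / 2) :
    Integrable (fun ω ↦ exp (t * ∑ i, a i * (X i ω ^ 2 - 1))) P := by
  have := hind.isProbabilityMeasure
  rw [← mgf_pos_iff, mgf_sum_mul_sq_sub_one hX hind]
  refine Finset.prod_pos fun i _ ↦ ?_
  rw [mgf_sq_sub_one_gaussianReal (ht i)]
  exact exp_pos _

lemma mgf_sum_mul_sq_sub_one_le (hX : ∀ i, HasLaw (X i) (gaussianReal 0 1) P)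
    (hind : iIndepFun X P) {a : ι → ℝ} {t : ℝ} (ht : ∀ i, |a i * t| ≤ 1 / 4) :
    mgf (fun ω ↦ ∑ i, a i * (X i ω ^ 2 - 1)) P t ≤ exp (4 * (∑ i, a i ^ 2) * t ^ 2) := by
  calc mgf (fun ω ↦ ∑ i, a i * (X i ω ^ 2 - 1)) P t
    _ = ∏ i, mgf (fun x ↦ x ^ 2 - 1) (gaussianReal 0 1) (a i * t) :=
      mgf_sum_mul_sq_sub_one hX hind a t
    _ ≤ ∏ i, exp (4 * (a i * t) ^ 2) :=
      Finset.prod_le_prod (fun _ _ ↦ mgf_nonneg) fun i _ ↦ mgf_sq_sub_one_gaussianReal_le (ht i)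
    _ = exp (4 * (∑ i, a i ^ 2) * t ^ 2) := by
      rw [← exp_sum, Finset.mul_sum, Finset.sum_mul]
      simp only [mul_pow, mul_assoc]

lemma integral_rpow_abs_sum_mul_sq_sub_one_le_of_sum_sq_le
    (hX : ∀ i, HasLaw (X i) (gaussianReal 0 1) P) (hind : iIndepFun X P) {a : ι → ℝ} {σ p : ℝ}
    (hσ : 0 < σ) (ha : ∑ i, a i ^ 2 ≤ σ ^ 2) (hp : 0 ≤ p) :
    ∫ ω, |∑ i, a i * (X i ω ^ 2 - 1)| ^ p ∂P ≤ 2 * exp (1 / 4) * (4 * p * σ) ^ p := by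
  have abs_le_σ (i : ι) : |a i| ≤ σ :=
    abs_le_of_sq_le_sq ((Finset.single_le_sum (f := fun i ↦ a i ^ 2) (fun i _ ↦ sq_nonneg _)
      (Finset.mem_univ i)).trans ha) hσ.le
  have abs_mul_le {t : ℝ} (ht : |t| = (4 * σ)⁻¹) (i : ι) : |a i * t| ≤ 1 / 4 := by
    rw [abs_mul, ht, ← div_eq_mul_inv, div_le_iff₀ (by positivity)]
    linarith [abs_le_σ i]
  have integrable_exp {t : ℝ} (ht : |t| = (4 * σ)⁻¹) :=
    integrable_exp_mul_sum_mul_sq_sub_one hX hind fun i ↦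
      (le_abs_self _).trans_lt ((abs_mul_le ht i).trans_lt (by norm_num))
  have mgf_le {t : ℝ} (ht : |t| = (4 * σ)⁻¹) :
      mgf (fun ω ↦ ∑ i, a i * (X i ω ^ 2 - 1)) P t ≤ exp (1 / 4) := by
    refine (mgf_sum_mul_sq_sub_one_le hX hind (abs_mul_le ht)).trans (exp_le_exp.2 ?_)
    calc 4 * (∑ i, a i ^ 2) * t ^ 2
      _ ≤ 4 * σ ^ 2 * t ^ 2 := by gcongr
      _ = 1 / 4 := by
        rw [← sq_abs t, ht]
        field_simp
  have abs_t : |(4 * σ)⁻¹| = (4 * σ)⁻¹ := abs_of_pos (by positivity)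
  have abs_neg_t : |-(4 * σ)⁻¹| = (4 * σ)⁻¹ := by rw [abs_neg, abs_t]
  calc ∫ ω, |∑ i, a i * (X i ω ^ 2 - 1)| ^ p ∂P
    _ ≤ (p / |(4 * σ)⁻¹|) ^ p * (mgf (fun ω ↦ ∑ i, a i * (X i ω ^ 2 - 1)) P (4 * σ)⁻¹ +
          mgf (fun ω ↦ ∑ i, a i * (X i ω ^ 2 - 1)) P (-(4 * σ)⁻¹)) :=
      integral_rpow_abs_le_mgf_add_mgf (by positivity) hp (integrable_exp abs_t)
        (integrable_exp abs_neg_t)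
    _ ≤ (p / |(4 * σ)⁻¹|) ^ p * (exp (1 / 4) + exp (1 / 4)) := by
      gcongr
      exacts [mgf_le abs_t, mgf_le abs_neg_t]
    _ = 2 * exp (1 / 4) * (4 * p * σ) ^ p := by
      rw [abs_t, div_inv_eq_mul, show p * (4 * σ) = 4 * p * σ by ring]
      ring

theorem integral_rpow_abs_sum_mul_sq_sub_one_le (hX : ∀ i, HasLaw (X i) (gaussianReal 0 1) P)
    (hind : iIndepFun X P) (a : ι → ℝ) {p : ℝ} (hp : 0 < p) :
    ∫ ω, |∑ i, a i * (X i ω ^ 2 - 1)| ^ p ∂P ≤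
      2 * exp (1 / 4) * (4 * p) ^ p * √(∑ i, a i ^ 2) ^ p := by
  have sum_nonneg : 0 ≤ ∑ i, a i ^ 2 := Finset.sum_nonneg fun i _ ↦ sq_nonneg (a i)
  rcases sum_nonneg.eq_or_lt with sum_zero | sum_pos
  · have a_zero (i : ι) : a i = 0 := pow_eq_zero_iff two_ne_zero |>.1 <|
      (Finset.sum_eq_zero_iff_of_nonneg fun i _ ↦ sq_nonneg (a i)).1 sum_zero.symm i
        (Finset.mem_univ i)
    simp [a_zero, zero_rpow hp.ne']
  · rw [mul_assoc, ← mul_rpow (by positivity) (sqrt_nonneg _)]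
    exact integral_rpow_abs_sum_mul_sq_sub_one_le_of_sum_sq_le hX hind (sqrt_pos.2 sum_pos)
      (sq_sqrt sum_nonneg).ge hp.le

end WeightedSum

section Diagonalization

variable {ι : Type*} [Fintype ι]

lemma hasLaw_repr_of_hasLaw_stdGaussian {Ω E : Type*} [MeasurableSpace Ω] {P : Measure Ω}
    [NormedAddCommGroup E] [InnerProductSpace ℝ E] [FiniteDimensional ℝ E] [MeasurableSpace E]
    [BorelSpace E] {ζ : Ω → E} (hζ : HasLaw ζ (stdGaussian E) P) (b : OrthonormalBasis ι ℝ E) :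
    HasLaw (fun ω i ↦ b.repr (ζ ω) i) (Measure.pi fun _ : ι ↦ gaussianReal 0 1) P := by
  have hrepr : HasLaw (fun x i ↦ b.repr x i) (Measure.pi fun _ : ι ↦ gaussianReal 0 1)
      (stdGaussian E) := by
    refine ⟨by fun_prop, ?_⟩
    rw [stdGaussian_eq_map_pi_orthonormalBasis b, Measure.map_map (by fun_prop) (by fun_prop)]
    convert! Measure.map_id
    ext x i
    simp [b.repr_apply_apply, b.orthonormal.inner_right_fintype]
  exact hrepr.comp hζ

variable [DecidableEq ι]

lemma star_dotProduct_mulVec_eq_sum_eigenvalues {𝕜 : Type*} [RCLike 𝕜] {A : Matrix ι ι 𝕜}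
    (hA : A.IsHermitian) (x : ι → 𝕜) :
    star x ⬝ᵥ A *ᵥ x =
      ∑ i, (hA.eigenvalues i : 𝕜) * ‖hA.eigenvectorBasis.repr (toLp 2 x) i‖ ^ 2 := by
  set y := hA.eigenvectorBasis.repr (toLp 2 x)
  have expansion : x = ∑ i, y i • ⇑(hA.eigenvectorBasis i) := by
    simpa using congrArg ofLp (hA.eigenvectorBasis.sum_repr (toLp 2 x)).symm
  have dot_eigenvector (i : ι) : star x ⬝ᵥ hA.eigenvectorBasis i = star (y i) := by
    simp [y, OrthonormalBasis.repr_apply_apply, EuclideanSpace.inner_eq_star_dotProduct,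
      dotProduct_star, dotProduct_comm]
  calc star x ⬝ᵥ A *ᵥ x
    _ = star x ⬝ᵥ A *ᵥ ∑ i, y i • ⇑(hA.eigenvectorBasis i) := by rw [← expansion]
    _ = ∑ i, (hA.eigenvalues i : 𝕜) * ‖y i‖ ^ 2 := by
      simp only [mulVec_sum, mulVec_smul, hA.mulVec_eigenvectorBasis, dotProduct_sum,
        dotProduct_smul, dot_eigenvector, RCLike.real_smul_eq_coe_mul, smul_eq_mul,
        ← RCLike.mul_conj, RCLike.star_def]
      exact Finset.sum_congr rfl fun i _ ↦ by ring

lemma trace_conjTranspose_mul_self_eq_sum_eigenvalues_sq {𝕜 : Type*} [RCLike 𝕜]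
    {A : Matrix ι ι 𝕜} (hA : A.IsHermitian) :
    (Aᴴ * A).trace = ∑ i, (hA.eigenvalues i : 𝕜) ^ 2 := by
  have diagonalized : A * A = Unitary.conjStarAlgAut 𝕜 _ hA.eigenvectorUnitary
      (diagonal fun i ↦ (hA.eigenvalues i : 𝕜) ^ 2) := by
    conv_lhs => rw [hA.spectral_theorem]
    rw [← map_mul, diagonal_mul_diagonal]
    simp only [Function.comp_apply, pow_two]
  rw [hA.eq, diagonalized, Unitary.conjStarAlgAut_apply, trace_mul_cycle,
    Unitary.coe_star_mul_self, one_mul, trace_diagonal]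

end Diagonalization

section SymmetricPart

open scoped ComplexOrder

variable {ι : Type*} [Fintype ι]

lemma dotProduct_selfAdjointPart_mulVec {R : Type*} [CommRing R] [StarRing R] [TrivialStar R]
    [Invertible (2 : R)] (Q : Matrix ι ι R) (x : ι → R) :
    x ⬝ᵥ (selfAdjointPart R Q : Matrix ι ι R) *ᵥ x = x ⬝ᵥ Q *ᵥ x := by
  have transpose_form : x ⬝ᵥ Qᵀ *ᵥ x = x ⬝ᵥ Q *ᵥ x := by
    rw [mulVec_transpose, dotProduct_comm, ← dotProduct_mulVec]
  rw [selfAdjointPart_apply_coe, star_eq_conjTranspose, conjTranspose_eq_transpose_of_trivial,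
    smul_mulVec, add_mulVec, dotProduct_smul, dotProduct_add, transpose_form, ← two_smul R,
    invOf_smul_smul]

lemma trace_conjTranspose_mul_self_add_of_conjTranspose_eq_neg {R : Type*} [CommRing R]
    [StarRing R] {S K : Matrix ι ι R} (hS : S.IsHermitian) (hK : Kᴴ = -K) :
    ((S + K)ᴴ * (S + K)).trace = (Sᴴ * S).trace + (Kᴴ * K).trace := by
  have orthogonality : (Sᴴ * K).trace + (Kᴴ * S).trace = 0 := by
    rw [hS.eq, hK, neg_mul, trace_neg, trace_mul_comm K, add_neg_cancel]
  simp only [conjTranspose_add, add_mul, mul_add, trace_add]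
  linear_combination orthogonality

lemma trace_conjTranspose_mul_self_selfAdjointPart_le {𝕜 : Type*} [RCLike 𝕜] (Q : Matrix ι ι 𝕜) :
    ((selfAdjointPart ℝ Q : Matrix ι ι 𝕜)ᴴ * (selfAdjointPart ℝ Q : Matrix ι ι 𝕜)).trace ≤
      (Qᴴ * Q).trace := by
  have pythagoras := trace_conjTranspose_mul_self_add_of_conjTranspose_eq_neg
    (selfAdjointPart ℝ Q).2 (skewAdjointPart ℝ Q).2
  rw [StarModule.selfAdjointPart_add_skewAdjointPart] at pythagoras
  rw [pythagoras]
  exact le_add_of_nonneg_right (posSemidef_conjTranspose_mul_self _).trace_nonneg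

end SymmetricPart

section QuadraticForm

variable {ι : Type*} [Fintype ι] {Ω : Type*} [MeasurableSpace Ω] {P : Measure Ω} {ξ : Ω → ι → ℝ}

lemma exists_iIndepFun_dotProduct_mulVec_eq_sum [DecidableEq ι] {Q : Matrix ι ι ℝ}
    (hQ : Q.IsHermitian) (hξ : HasLaw ξ (Measure.pi fun _ : ι ↦ gaussianReal 0 1) P) :
    ∃ X : ι → Ω → ℝ, (∀ i, HasLaw (X i) (gaussianReal 0 1) P) ∧ iIndepFun X P ∧
      ∀ ω, ξ ω ⬝ᵥ Q *ᵥ ξ ω = ∑ i, hQ.eigenvalues i * X i ω ^ 2 := by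
  have := hξ.isProbabilityMeasure
  have toLp_law : HasLaw (fun ω ↦ toLp 2 (ξ ω)) (stdGaussian (EuclideanSpace ℝ ι)) P :=
    HasLaw.comp ⟨by fun_prop, map_pi_eq_stdGaussian⟩ hξ
  have joint_law := hasLaw_repr_of_hasLaw_stdGaussian toLp_law hQ.eigenvectorBasis
  have marginal_law (i : ι) := (measurePreserving_eval _ i).fun_comp_hasLaw joint_law
  exact ⟨fun i ω ↦ hQ.eigenvectorBasis.repr (toLp 2 (ξ ω)) i, marginal_law,
    (iIndepFun_iff_hasLaw_pi_pi marginal_law).2 joint_law,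
    fun ω ↦ by simpa using star_dotProduct_mulVec_eq_sum_eigenvalues hQ (ξ ω)⟩

theorem integral_rpow_abs_dotProduct_mulVec_sub_integral_le_of_isHermitian {Q : Matrix ι ι ℝ}
    (hQ : Q.IsHermitian) (hξ : HasLaw ξ (Measure.pi fun _ : ι ↦ gaussianReal 0 1) P)
    {p : ℝ} (hp : 0 < p) :
    ∫ ω, |ξ ω ⬝ᵥ Q *ᵥ ξ ω - ∫ ω', ξ ω' ⬝ᵥ Q *ᵥ ξ ω' ∂P| ^ p ∂P ≤
      2 * exp (1 / 4) * (4 * p) ^ p * √(Qᴴ * Q).trace ^ p := by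
  classical
  obtain ⟨X, hX, hind, form_eq⟩ := exists_iIndepFun_dotProduct_mulVec_eq_sum hQ hξ
  have centered (ω : Ω) : ξ ω ⬝ᵥ Q *ᵥ ξ ω - ∫ ω', ξ ω' ⬝ᵥ Q *ᵥ ξ ω' ∂P =
      ∑ i, hQ.eigenvalues i * (X i ω ^ 2 - 1) := by
    simp only [form_eq, integral_sum_mul_sq hX, mul_sub, mul_one, Finset.sum_sub_distrib]
  simp only [centered, trace_conjTranspose_mul_self_eq_sum_eigenvalues_sq hQ,
    RCLike.ofReal_real_eq_id, id]
  exact integral_rpow_abs_sum_mul_sq_sub_one_le hX hind hQ.eigenvalues hp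

theorem stmt5_general (hξ : HasLaw ξ (Measure.pi fun _ : ι ↦ gaussianReal 0 1) P)
    (Q : Matrix ι ι ℝ) {g : ℝ} (hg : 0 < g) :
    ∫ ω, |ξ ω ⬝ᵥ Q *ᵥ ξ ω - ∫ ω', ξ ω' ⬝ᵥ Q *ᵥ ξ ω' ∂P| ^ g ∂P ≤
      2 * exp (1 / 4) * (4 * g) ^ g * √(Qᵀ * Q).trace ^ g := by
  have symmetrized := integral_rpow_abs_dotProduct_mulVec_sub_integral_le_of_isHermitian
    (selfAdjointPart ℝ Q).2 hξ hg
  simp only [dotProduct_selfAdjointPart_mulVec] at symmetrized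
  rw [← conjTranspose_eq_transpose_of_trivial]
  refine symmetrized.trans ?_
  gcongr
  exact trace_conjTranspose_mul_self_selfAdjointPart_le Q

end QuadraticForm

/-- Lemma 5.1: for every `g ≥ 2` there is a constant `c` depending only on `g` such that
for every symmetric matrix `Q` and standard normal vector `ξ`,
`E|ξ′Qξ − E ξ′Qξ|^g ≤ c ‖Q‖₂^g`, where `‖Q‖₂` is the Frobenius norm. -/
theorem stmt5 : ∀ g : ℝ, 2 ≤ g → ∃ c : ℝ,
    ∀ (n : ℕ) (Q : Matrix (Fin n) (Fin n) ℝ), Q.IsSymm →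
      ∀ (Ω : Type) (_ : MeasurableSpace Ω) (P : Measure Ω), IsProbabilityMeasure P →
        ∀ (ξ : Ω → Fin n → ℝ), Measurable ξ →
          P.map ξ = mvGaussian n (1 : Matrix (Fin n) (Fin n) ℝ) →
          ∫ ω, |(ξ ω ⬝ᵥ (Q *ᵥ ξ ω)) - ∫ ω', ξ ω' ⬝ᵥ (Q *ᵥ ξ ω') ∂P| ^ g ∂P
            ≤ c * (Real.sqrt ((Qᵀ * Q).trace)) ^ g :=
  fun _ hg ↦ ⟨_, fun n Q _ _ _ _ _ _ hξ hmap ↦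
    stmt5_general ⟨hξ.aemeasurable, hmap.trans (mvGaussian_one_eq_pi n)⟩ Q (two_pos.trans_le hg)⟩
end

section
/- Let a₁, …, a_s and b₁, …, b_s be real numbers and δ₁, …, δ_s ≥ 0 be such that a_i ≤ b_i + Δ_a for all 1 ≤ i ≤ s, where Δ_a = ∑_{j=1}^{s} δ_j a_j. If Δ = ∑_{j=1}^{s} δ_j < 1, then a_i ≤ b_i + (1 − Δ)^{-1} Δ_b for all 1 ≤ i ≤ s, where Δ_b = ∑_{j=1}^{s} δ_j b_j. -/
section OrderedModule

variable {ι K E : Type*} [AddCommGroup E] [PartialOrder E] [IsOrderedAddMonoid E]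

theorem sum_smul_le_sum_smul_add_sum_smul [Ring K] [PartialOrder K] [Module K E]
    [PosSMulMono K E] {t : Finset ι} {a b : ι → E} {δ : ι → K} {c : E}
    (hδ : ∀ j ∈ t, 0 ≤ δ j) (h : ∀ j ∈ t, a j ≤ b j + c) :
    ∑ j ∈ t, δ j • a j ≤ ∑ j ∈ t, δ j • b j + (∑ j ∈ t, δ j) • c :=
  calc
    ∑ j ∈ t, δ j • a j ≤ ∑ j ∈ t, δ j • (b j + c) :=
      Finset.sum_le_sum fun j hj => smul_le_smul_of_nonneg_left (h j hj) (hδ j hj)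
    _ = ∑ j ∈ t, δ j • b j + (∑ j ∈ t, δ j) • c := by
      simp only [smul_add, Finset.sum_add_distrib, Finset.sum_smul]

variable [Field K] [LinearOrder K] [IsStrictOrderedRing K] [Module K E] [PosSMulMono K E]

theorem le_inv_one_sub_smul_of_le_add_smul {r : K} {x y : E} (hr : r < 1)
    (h : x ≤ y + r • x) : x ≤ (1 - r)⁻¹ • y := by
  rw [le_inv_smul_iff_of_pos (sub_pos.mpr hr), sub_smul, one_smul]
  exact sub_le_iff_le_add.mpr h

theorem stmt7_general {t : Finset ι} {a b : ι → E} {δ : ι → K} (hδ : ∀ j ∈ t, 0 ≤ δ j)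
    (h : ∀ i ∈ t, a i ≤ b i + ∑ j ∈ t, δ j • a j) (hΔ : ∑ j ∈ t, δ j < 1) :
    ∀ i ∈ t, a i ≤ b i + (1 - ∑ j ∈ t, δ j)⁻¹ • ∑ j ∈ t, δ j • b j := by
  intro i hi
  have self_bound : ∑ j ∈ t, δ j • a j ≤
      ∑ j ∈ t, δ j • b j + (∑ j ∈ t, δ j) • ∑ j ∈ t, δ j • a j :=
    sum_smul_le_sum_smul_add_sum_smul hδ h
  calc
    a i ≤ b i + ∑ j ∈ t, δ j • a j := h i hi
    _ ≤ b i + (1 - ∑ j ∈ t, δ j)⁻¹ • ∑ j ∈ t, δ j • b j := by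
      gcongr
      exact le_inv_one_sub_smul_of_le_add_smul hΔ self_bound

end OrderedModule

/-- Lemma 5.3: if `a_i ≤ b_i + Δ_a` for all `i`, where `Δ_a = ∑_j δ_j a_j` with `δ_j ≥ 0`,
and `Δ = ∑_j δ_j < 1`, then `a_i ≤ b_i + (1 − Δ)⁻¹ Δ_b` for all `i`,
where `Δ_b = ∑_j δ_j b_j`. -/
theorem stmt7 {s : ℕ} (a b δ : Fin s → ℝ) (hδ : ∀ j, 0 ≤ δ j)
    (h : ∀ i, a i ≤ b i + ∑ j, δ j * a j) (hΔ : ∑ j, δ j < 1) :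
    ∀ i, a i ≤ b i + (1 - ∑ j, δ j)⁻¹ * ∑ j, δ j * b j := fun i =>
  stmt7_general (fun j _ => hδ j) (fun j _ => h j) hΔ i (Finset.mem_univ i)
end

section
/- Let Σ be an n×n positive definite real matrix, let X be an n×p real matrix of full column rank p < n, and let T be an n×(n−p) real matrix of full column rank n−p with T′X = 0. Then T′ΣT and X′Σ⁻¹X are invertible and T(T′ΣT)⁻¹T′ = Σ⁻¹ − Σ⁻¹X(X′Σ⁻¹X)⁻¹X′Σ⁻¹. -/
open Matrix

/-!
The matrices `ΣT(T′ΣT)⁻¹T′` and `X(X′Σ⁻¹X)⁻¹X′Σ⁻¹` are oblique projections onto the column spaces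
of `ΣT` and `X`, and `T′X = 0` makes each annihilate the range of the other. Equivalently, stacking
`(T′ΣT)⁻¹T′` on top of `(X′Σ⁻¹X)⁻¹X′Σ⁻¹` gives a left inverse of `[ΣT  X]`. As `(n - p) + p = n`,
these block matrices are square, so it is also a right inverse: the two projections sum to the
identity. Multiplying by `Σ⁻¹` on the left gives the formula.
-/

theorem mulVec_injective_iff_rank_eq_card {R m n : Type*} [CommSemiring R] [Nontrivial R]
    [OrzechProperty R] [Fintype n] {A : Matrix m n R} :
    Function.Injective A.mulVec ↔ A.rank = Fintype.card n := by
  rw [mulVec_injective_iff, linearIndependent_iff_card_eq_finrank_span, Set.finrank,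
    rank_eq_finrank_span_cols, eq_comm]

section ObliqueProjections

variable {R n k p : Type*} [CommRing R] [Fintype n] [DecidableEq n] [Fintype k] [DecidableEq k]
  [Fintype p] [DecidableEq p]

theorem mul_inv_mul_add_mul_inv_mul_eq_one
    (hcard : Fintype.card n = Fintype.card k + Fintype.card p)
    {A : Matrix n k R} {B : Matrix k n R} {C : Matrix n p R} {D : Matrix p n R}
    (hBA : IsUnit (B * A)) (hDC : IsUnit (D * C)) (hBC : B * C = 0) (hDA : D * A = 0) :
    A * (B * A)⁻¹ * B + C * (D * C)⁻¹ * D = 1 := by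
  have hleft : fromRows ((B * A)⁻¹ * B) ((D * C)⁻¹ * D) * fromCols A C = 1 := by
    simp only [fromRows_mul_fromCols, Matrix.mul_assoc, hBC, hDA, Matrix.mul_zero,
      nonsing_inv_mul _ ((isUnit_iff_isUnit_det _).mp hBA),
      nonsing_inv_mul _ ((isUnit_iff_isUnit_det _).mp hDC), fromBlocks_one]
  have e : n ≃ k ⊕ p := Fintype.equivOfCardEq (by rw [hcard, Fintype.card_sum])
  have hright := (fromCols_mul_fromRows_eq_one_comm e ..).mpr hleft
  rwa [fromCols_mul_fromRows, ← Matrix.mul_assoc, ← Matrix.mul_assoc] at hright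

theorem mul_inv_mul_eq_inv_sub_of_mul_eq_zero
    (hcard : Fintype.card n = Fintype.card k + Fintype.card p)
    {S : Matrix n n R} {A : Matrix n k R} {B : Matrix k n R} {C : Matrix n p R} {D : Matrix p n R}
    (hS : IsUnit S) (hBA : IsUnit (B * S * A)) (hDC : IsUnit (D * S⁻¹ * C))
    (hBC : B * C = 0) (hDA : D * A = 0) :
    A * (B * S * A)⁻¹ * B = S⁻¹ - S⁻¹ * C * (D * S⁻¹ * C)⁻¹ * D * S⁻¹ := by
  have hSdet : IsUnit S.det := (isUnit_iff_isUnit_det S).mp hS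
  have hDSA : D * S⁻¹ * (S * A) = 0 := by
    rw [Matrix.mul_assoc, nonsing_inv_mul_cancel_left _ _ hSdet, hDA]
  have hone : S * A * (B * S * A)⁻¹ * B + C * (D * S⁻¹ * C)⁻¹ * (D * S⁻¹) = 1 := by
    rw [Matrix.mul_assoc B] at hBA ⊢
    exact mul_inv_mul_add_mul_inv_mul_eq_one hcard hBA hDC hBC hDSA
  rw [eq_sub_iff_add_eq]
  calc A * (B * S * A)⁻¹ * B + S⁻¹ * C * (D * S⁻¹ * C)⁻¹ * D * S⁻¹
      = S⁻¹ * (S * A * (B * S * A)⁻¹ * B + C * (D * S⁻¹ * C)⁻¹ * (D * S⁻¹)) := by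
        simp only [Matrix.mul_add, Matrix.mul_assoc, nonsing_inv_mul_cancel_left _ _ hSdet]
    _ = S⁻¹ := by rw [hone, Matrix.mul_one]

end ObliqueProjections

theorem isUnit_conjTranspose_mul_mul_same_of_rank_eq_card {K n k : Type*} [Field K]
    [PartialOrder K] [StarRing K] [Fintype n] [Fintype k] [DecidableEq k]
    {S : Matrix n n K} (hS : S.PosDef) {A : Matrix n k K} (hA : A.rank = Fintype.card k) :
    IsUnit (Aᴴ * S * A) :=
  (hS.conjTranspose_mul_mul_same (mulVec_injective_iff_rank_eq_card.mpr hA)).isUnit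

theorem stmt10_general {K n k p : Type*} [Field K] [PartialOrder K] [StarRing K]
    [Fintype n] [DecidableEq n] [Fintype k] [DecidableEq k] [Fintype p] [DecidableEq p]
    (hcard : Fintype.card n = Fintype.card k + Fintype.card p)
    {S : Matrix n n K} (hS : S.PosDef)
    {X : Matrix n p K} (hX : X.rank = Fintype.card p)
    {T : Matrix n k K} (hT : T.rank = Fintype.card k) (hTX : Tᴴ * X = 0) :
    IsUnit (Tᴴ * S * T) ∧ IsUnit (Xᴴ * S⁻¹ * X) ∧
      T * (Tᴴ * S * T)⁻¹ * Tᴴ = S⁻¹ - S⁻¹ * X * (Xᴴ * S⁻¹ * X)⁻¹ * Xᴴ * S⁻¹ := by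
  have hTST : IsUnit (Tᴴ * S * T) := isUnit_conjTranspose_mul_mul_same_of_rank_eq_card hS hT
  have hXSX : IsUnit (Xᴴ * S⁻¹ * X) := isUnit_conjTranspose_mul_mul_same_of_rank_eq_card hS.inv hX
  have hXT : Xᴴ * T = 0 := by simpa using congrArg conjTranspose hTX
  exact ⟨hTST, hXSX, mul_inv_mul_eq_inv_sub_of_mul_eq_zero hcard hS.isUnit hTST hXSX hTX hXT⟩

/-- Identity (2.6): for `Σ` positive definite, `X` of full column rank `p < n` and `T` of
full column rank `n − p` with `T′X = 0`, the matrices `T′ΣT` and `X′Σ⁻¹X` are invertible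
and `T(T′ΣT)⁻¹T′ = Σ⁻¹ − Σ⁻¹X(X′Σ⁻¹X)⁻¹X′Σ⁻¹`. -/
theorem stmt10 {n p : ℕ} (hpn : p < n)
    (Sig : Matrix (Fin n) (Fin n) ℝ) (hSig : Sig.PosDef)
    (X : Matrix (Fin n) (Fin p) ℝ) (hX : X.rank = p)
    (T : Matrix (Fin n) (Fin (n - p)) ℝ) (hT : T.rank = n - p)
    (hTX : Tᵀ * X = 0) :
    IsUnit (Tᵀ * Sig * T) ∧ IsUnit (Xᵀ * Sig⁻¹ * X) ∧
      T * (Tᵀ * Sig * T)⁻¹ * Tᵀ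
        = Sig⁻¹ - Sig⁻¹ * X * (Xᵀ * Sig⁻¹ * X)⁻¹ * Xᵀ * Sig⁻¹ := by
  simp only [← conjTranspose_eq_transpose_of_trivial] at hTX ⊢
  exact stmt10_general (by simp [hpn.le]) hSig (by simpa using hX) (by simpa using hT) hTX
end

section
/- Let Σ be an n×n positive definite real matrix and X an n×p real matrix of full column rank p < n such that X′X = (n/p)I_p and Σ(XX′) = (XX′)Σ. Then X′Σ⁻¹X is invertible and Σ⁻¹ − Σ⁻¹X(X′Σ⁻¹X)⁻¹X′Σ⁻¹ = (I_n − (p/n)XX′)Σ⁻¹. -/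
open Matrix

/-!
If `T` commutes with the projection `P = X(YX)⁻¹Y` onto the column space of `X` along the kernel
of `Y`, then `YT = YPT = YTP = MY` with `M = YTX(YX)⁻¹`, so `T` merely recombines the rows of `Y`.
When `T` is invertible so is `M`, and then `Y` and `YT` define the same projection. For `T = Σ⁻¹`
and `Y = X′` this says that generalized and ordinary least squares coincide.
-/

section ObliqueProj

variable {m k R : Type*} [Fintype m] [Fintype k] [DecidableEq k] [CommRing R]
  {X : Matrix m k R} {Y : Matrix k m R} {T : Matrix m m R}

/-- The projection onto the column space of `X` along the kernel of `Y`, for `Y * X` invertible.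
With `Y = Xᵀ` it is the hat matrix of ordinary least squares, and with `Y = Xᵀ * Σ⁻¹` that of
generalized least squares. -/
noncomputable def obliqueProj (X : Matrix m k R) (Y : Matrix k m R) : Matrix m m R :=
  X * (Y * X)⁻¹ * Y

theorem mul_obliqueProj (h : IsUnit (Y * X)) : Y * obliqueProj X Y = Y := by
  rw [obliqueProj, ← Matrix.mul_assoc, ← Matrix.mul_assoc,
    mul_nonsing_inv _ ((isUnit_iff_isUnit_det _).mp h), Matrix.one_mul]

theorem obliqueProj_mul_left {M : Matrix k k R} (hM : IsUnit M) :
    obliqueProj X (M * Y) = obliqueProj X Y := by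
  rw [isUnit_iff_isUnit_det] at hM
  calc X * (M * Y * X)⁻¹ * (M * Y)
      = X * ((Y * X)⁻¹ * (M⁻¹ * M)) * Y := by
        rw [Matrix.mul_assoc M, Matrix.mul_inv_rev]
        simp only [Matrix.mul_assoc]
    _ = X * (Y * X)⁻¹ * Y := by rw [nonsing_inv_mul _ hM, Matrix.mul_one]

theorem obliqueProj_eq_smul {c : R} (h : c • (Y * X) = 1) : obliqueProj X Y = c • (X * Y) := by
  have hinv : (Y * X)⁻¹ = c • 1 := inv_eq_left_inv (by rw [Matrix.smul_mul, Matrix.one_mul, h])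
  rw [obliqueProj, hinv, Matrix.mul_smul, Matrix.mul_one, Matrix.smul_mul]

theorem mul_eq_mul_of_commute_obliqueProj (h : IsUnit (Y * X))
    (hT : Commute T (obliqueProj X Y)) : Y * T = Y * T * X * (Y * X)⁻¹ * Y :=
  calc Y * T
      = Y * (obliqueProj X Y * T) := by rw [← Matrix.mul_assoc, mul_obliqueProj h]
    _ = Y * (T * obliqueProj X Y) := by rw [hT.eq]
    _ = Y * T * X * (Y * X)⁻¹ * Y := by simp only [obliqueProj, Matrix.mul_assoc]

variable [DecidableEq m]

theorem exists_isUnit_mul_eq_mul (h : IsUnit (Y * X)) (hT : IsUnit T)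
    (hcomm : Commute T (obliqueProj X Y)) : ∃ M : Matrix k k R, IsUnit M ∧ Y * T = M * Y := by
  obtain ⟨T, rfl⟩ := hT
  have hM := mul_eq_mul_of_commute_obliqueProj h hcomm
  have hN := mul_eq_mul_of_commute_obliqueProj h hcomm.units_inv_left
  set M := Y * (T : Matrix m m R) * X * (Y * X)⁻¹
  set N := Y * (↑T⁻¹ : Matrix m m R) * X * (Y * X)⁻¹
  have hMNY : M * N * Y = Y := by
    rw [Matrix.mul_assoc, ← hN, ← Matrix.mul_assoc, ← hM, Matrix.mul_assoc, T.mul_inv,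
      Matrix.mul_one]
  have hMN : M * N = 1 := h.mul_right_cancel <| by
    rw [← Matrix.mul_assoc, hMNY, one_mul]
  exact ⟨M, .of_mul_eq_one N hMN, hM⟩

theorem isUnit_mul_mul_of_commute_obliqueProj (h : IsUnit (Y * X)) (hT : IsUnit T)
    (hcomm : Commute T (obliqueProj X Y)) : IsUnit (Y * T * X) := by
  obtain ⟨M, hM, hYT⟩ := exists_isUnit_mul_eq_mul h hT hcomm
  rw [hYT, Matrix.mul_assoc]
  exact hM.mul h

theorem obliqueProj_mul_right_of_commute (h : IsUnit (Y * X)) (hT : IsUnit T)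
    (hcomm : Commute T (obliqueProj X Y)) : obliqueProj X (Y * T) = obliqueProj X Y := by
  obtain ⟨M, hM, hYT⟩ := exists_isUnit_mul_eq_mul h hT hcomm
  rw [hYT, obliqueProj_mul_left hM]

theorem sub_mul_inv_mul_eq_one_sub_obliqueProj_mul (h : IsUnit (Y * X)) (hT : IsUnit T)
    (hcomm : Commute T (obliqueProj X Y)) :
    T - T * X * (Y * T * X)⁻¹ * Y * T = (1 - obliqueProj X Y) * T :=
  calc T - T * X * (Y * T * X)⁻¹ * Y * T
      = T - T * obliqueProj X (Y * T) := by simp only [obliqueProj, Matrix.mul_assoc]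
    _ = T - obliqueProj X Y * T := by
        rw [obliqueProj_mul_right_of_commute h hT hcomm, hcomm.eq]
    _ = (1 - obliqueProj X Y) * T := by rw [Matrix.sub_mul, Matrix.one_mul]

theorem stmt11_general {S : Matrix m m R} (hS : IsUnit S) {c : R} (hYX : c • (Y * X) = 1)
    (hcomm : Commute S (X * Y)) :
    IsUnit (Y * S⁻¹ * X) ∧
      S⁻¹ - S⁻¹ * X * (Y * S⁻¹ * X)⁻¹ * Y * S⁻¹ = (1 - c • (X * Y)) * S⁻¹ := by
  have hunit : IsUnit (Y * X) := .of_mul_eq_one (c • 1) (by rw [mul_smul_one, hYX])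
  have hSinv : IsUnit S⁻¹ := isUnit_nonsing_inv_iff.mpr hS
  have hproj : obliqueProj X Y = c • (X * Y) := obliqueProj_eq_smul hYX
  have hSinv_comm : Commute S⁻¹ (obliqueProj X Y) := by
    obtain ⟨S, rfl⟩ := hS
    rw [hproj, ← coe_units_inv]
    exact (hcomm.smul_right c).units_inv_left
  rw [← hproj]
  exact ⟨isUnit_mul_mul_of_commute_obliqueProj hunit hSinv hSinv_comm,
    sub_mul_inv_mul_eq_one_sub_obliqueProj_mul hunit hSinv hSinv_comm⟩

end ObliqueProj

theorem div_smul_eq_one_of_eq_div_smul_one {K : Type*} [Field K] [CharZero K] {n p : ℕ}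
    (hn : n ≠ 0) {A : Matrix (Fin p) (Fin p) K} (hA : A = ((n : K) / p) • 1) :
    ((p : K) / n) • A = 1 := by
  -- For `p = 0` the scalar `n / p` is the junk value `0`, but all `0 × 0` matrices are equal.
  obtain rfl | hp := eq_or_ne p 0
  · exact Subsingleton.elim _ _
  · rw [hA, smul_smul, div_mul_div_cancel₀ (by exact_mod_cast hn), div_self (by exact_mod_cast hp),
      one_smul]

/-- Identity (5.6): if `Σ` is positive definite, `X` has full column rank `p < n`,
`X′X = (n/p) I_p` and `Σ` commutes with `XX′`, then `X′Σ⁻¹X` is invertible and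
`Σ⁻¹ − Σ⁻¹X(X′Σ⁻¹X)⁻¹X′Σ⁻¹ = (I − (p/n) XX′) Σ⁻¹`. -/
theorem stmt11 {n p : ℕ} (hpn : p < n)
    (Sig : Matrix (Fin n) (Fin n) ℝ) (hSig : Sig.PosDef)
    (X : Matrix (Fin n) (Fin p) ℝ) (hX : X.rank = p)
    (hXX : Xᵀ * X = ((n : ℝ) / (p : ℝ)) • (1 : Matrix (Fin p) (Fin p) ℝ))
    (hcomm : Sig * (X * Xᵀ) = (X * Xᵀ) * Sig) :
    IsUnit (Xᵀ * Sig⁻¹ * X) ∧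
      Sig⁻¹ - Sig⁻¹ * X * (Xᵀ * Sig⁻¹ * X)⁻¹ * Xᵀ * Sig⁻¹
        = ((1 : Matrix (Fin n) (Fin n) ℝ) - ((p : ℝ) / (n : ℝ)) • (X * Xᵀ)) * Sig⁻¹ :=
  stmt11_general hSig.isUnit (div_smul_eq_one_of_eq_div_smul_one (Nat.ne_zero_of_lt hpn) hXX)
    hcomm
end

section
/- Let V₀ = I_n and V₁, …, V_q be n×n positive semidefinite real matrices, let σ₀ > 0 and σ₁, …, σ_q ≥ 0, and set Σ = ∑_{j=0}^{q} σ_j V_j. Let X be an n×p real matrix of full column rank p, and set P = Σ⁻¹ − Σ⁻¹X(X′Σ⁻¹X)⁻¹X′Σ⁻¹. Then for every index i ∈ {0, 1, …, q} with σ_i > 0, |tr(Σ⁻¹V_i) − tr(PV_i)| ≤ p/σ_i. -/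
open Matrix

/-- The covariance matrix `Σ = ∑_{j=0}^{q} σ_j V_j` of a mixed ANOVA model. -/
noncomputable def SigM {n q : ℕ} (V : Fin (q + 1) → Matrix (Fin n) (Fin n) ℝ)
    (σ : Fin (q + 1) → ℝ) : Matrix (Fin n) (Fin n) ℝ :=
  ∑ j, σ j • V j

/-- The REML projection matrix `P = Σ⁻¹ − Σ⁻¹X(X′Σ⁻¹X)⁻¹X′Σ⁻¹`. -/
noncomputable def Pmat {n p q : ℕ} (V : Fin (q + 1) → Matrix (Fin n) (Fin n) ℝ)
    (σ : Fin (q + 1) → ℝ) (X : Matrix (Fin n) (Fin p) ℝ) : Matrix (Fin n) (Fin n) ℝ :=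
  (SigM V σ)⁻¹ - (SigM V σ)⁻¹ * X * (Xᵀ * (SigM V σ)⁻¹ * X)⁻¹ * Xᵀ * (SigM V σ)⁻¹

/-!
Write `Q = Σ⁻¹ − P = Σ⁻¹X(X′Σ⁻¹X)⁻¹X′Σ⁻¹`, so that the quantity to be bounded is `|tr(QV_i)|`.
The matrix `Q` is positive semidefinite, hence `W ↦ tr(QW)` is monotone for the Loewner order.
Applied to `0 ≤ σ_i V_i ≤ Σ` this gives `0 ≤ σ_i tr(QV_i) ≤ tr(QΣ)`, and by cyclicity `tr(QΣ)`
is the trace of the `p × p` identity matrix.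
-/

section Rank

variable {R m k : Type*} [CommRing R] [Nontrivial R] [Fintype k]

theorem mulVec_injective_iff_rank_eq_card_s12 {X : Matrix m k R} :
    Function.Injective X.mulVec ↔ X.rank = Fintype.card k := by
  rw [mulVec_injective_iff, linearIndependent_iff_card_eq_finrank_span,
    rank_eq_finrank_span_cols, Set.finrank, eq_comm]

end Rank

section RemlCorrection

variable {R m k : Type*} [CommRing R] [StarRing R] [Fintype m] [DecidableEq m]
  [Fintype k] [DecidableEq k]

/-- The matrix `Σ⁻¹ − P = Σ⁻¹X(X′Σ⁻¹X)⁻¹X′Σ⁻¹` for a covariance matrix `S` and a design matrix `X`.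
Its trace against `V_i` is the difference of the bias terms in the ML and REML score equations.
Transposes are replaced by conjugate transposes, so that complex matrices are covered. -/
noncomputable def remlCorrection (S : Matrix m m R) (X : Matrix m k R) : Matrix m m R :=
  S⁻¹ * X * (Xᴴ * S⁻¹ * X)⁻¹ * Xᴴ * S⁻¹

theorem trace_remlCorrection_mul {S : Matrix m m R} {X : Matrix m k R} (hS : IsUnit S)
    (hX : IsUnit (Xᴴ * S⁻¹ * X)) : (remlCorrection S X * S).trace = Fintype.card k := by
  rw [isUnit_iff_isUnit_det] at hS hX
  calc (remlCorrection S X * S).trace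
      = (S⁻¹ * X * (Xᴴ * S⁻¹ * X)⁻¹ * Xᴴ).trace := by
        rw [remlCorrection, nonsing_inv_mul_cancel_right _ _ hS]
    _ = (Xᴴ * S⁻¹ * X * (Xᴴ * S⁻¹ * X)⁻¹).trace := by
        rw [trace_mul_comm]
        simp only [Matrix.mul_assoc]
    _ = Fintype.card k := by rw [mul_nonsing_inv _ hX, trace_one]

theorem posSemidef_remlCorrection [PartialOrder R] {S : Matrix m m R} (hS : S.PosSemidef)
    (X : Matrix m k R) : (remlCorrection S X).PosSemidef := by
  have hQ := (hS.inv.conjTranspose_mul_mul_same X).inv.mul_mul_conjTranspose_same (S⁻¹ * X)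
  rwa [conjTranspose_mul, hS.inv.isHermitian.eq, ← Matrix.mul_assoc] at hQ

end RemlCorrection

theorem Pmat_eq_inv_sub_remlCorrection {n p q : ℕ} (V : Fin (q + 1) → Matrix (Fin n) (Fin n) ℝ)
    (σ : Fin (q + 1) → ℝ) (X : Matrix (Fin n) (Fin p) ℝ) :
    Pmat V σ X = (SigM V σ)⁻¹ - remlCorrection (SigM V σ) X := by
  rw [Pmat, remlCorrection, conjTranspose_eq_transpose_of_trivial]

section Loewner

open scoped ComplexOrder MatrixOrder

variable {𝕜 m k : Type*} [RCLike 𝕜]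

theorem posDef_of_posDef_of_le {A B : Matrix m m 𝕜} (hA : A.PosDef) (hAB : A ≤ B) :
    B.PosDef :=
  add_sub_cancel A B ▸ hA.add_posSemidef (le_iff.mp hAB)

variable [Fintype m]

theorem trace_mul_nonneg {Q W : Matrix m m 𝕜} (hQ : 0 ≤ Q) (hW : 0 ≤ W) :
    0 ≤ (Q * W).trace := by
  classical
  obtain ⟨B, rfl⟩ := CStarAlgebra.nonneg_iff_eq_star_mul_self.mp hQ
  rw [Matrix.mul_assoc, trace_mul_comm]
  exact (hW.posSemidef.mul_mul_conjTranspose_same B).trace_nonneg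

theorem trace_mul_le_trace_mul_left {Q W S : Matrix m m 𝕜} (hQ : 0 ≤ Q) (hWS : W ≤ S) :
    (Q * W).trace ≤ (Q * S).trace := by
  rw [← sub_nonneg, ← trace_sub, ← Matrix.mul_sub]
  exact trace_mul_nonneg hQ (sub_nonneg.mpr hWS)

variable [DecidableEq m] [Fintype k] [DecidableEq k]

theorem trace_remlCorrection_mul_le {S W : Matrix m m 𝕜} {X : Matrix m k 𝕜} (hS : S.PosDef)
    (hX : Function.Injective X.mulVec) (hWS : W ≤ S) :
    (remlCorrection S X * W).trace ≤ Fintype.card k := by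
  have hXSX : (Xᴴ * S⁻¹ * X).PosDef := hS.inv.conjTranspose_mul_mul_same hX
  rw [← trace_remlCorrection_mul hS.isUnit hXSX.isUnit]
  exact trace_mul_le_trace_mul_left (posSemidef_remlCorrection hS.posSemidef X).nonneg hWS

theorem stmt12_general {S W : Matrix m m 𝕜} {X : Matrix m k 𝕜} {c : ℝ} (hS : S.PosDef)
    (hX : Function.Injective X.mulVec) (hc : 0 < c) (hW : 0 ≤ W) (hWS : c • W ≤ S) :
    ‖(S⁻¹ * W).trace - ((S⁻¹ - remlCorrection S X) * W).trace‖ ≤ Fintype.card k / c := by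
  have h_nonneg : 0 ≤ (remlCorrection S X * W).trace :=
    trace_mul_nonneg (posSemidef_remlCorrection hS.posSemidef X).nonneg hW
  have h_le : c • (remlCorrection S X * W).trace ≤ Fintype.card k := by
    rw [← trace_smul, ← Matrix.mul_smul]
    exact trace_remlCorrection_mul_le hS hX hWS
  rw [Matrix.sub_mul, trace_sub, sub_sub_cancel, le_div_iff₀' hc,
    ← RCLike.ofReal_le_ofReal (K := 𝕜), RCLike.ofReal_mul, RCLike.norm_of_nonneg' h_nonneg,
    RCLike.ofReal_natCast, ← RCLike.real_smul_eq_coe_mul]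
  exact h_le

end Loewner

section SigM

open scoped MatrixOrder

variable {n q : ℕ} {V : Fin (q + 1) → Matrix (Fin n) (Fin n) ℝ} {σ : Fin (q + 1) → ℝ}

theorem smul_le_SigM (hV : ∀ j, (V j).PosSemidef) (hσ : ∀ j, 0 ≤ σ j) (i : Fin (q + 1)) :
    σ i • V i ≤ SigM V σ :=
  Finset.single_le_sum (f := fun j => σ j • V j) (fun j _ => ((hV j).smul (hσ j)).nonneg)
    (Finset.mem_univ i)

theorem posDef_SigM (hV : ∀ j, (V j).PosSemidef) (hσ : ∀ j, 0 ≤ σ j) {i : Fin (q + 1)}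
    (hVi : (V i).PosDef) (hσi : 0 < σ i) : (SigM V σ).PosDef :=
  posDef_of_posDef_of_le (hVi.smul hσi) (smul_le_SigM hV hσ i)

end SigM

/-- `|tr(Σ⁻¹V_i) − tr(PV_i)| ≤ p/σ_i` (Section 5.3). -/
theorem stmt12 {n p q : ℕ}
    (V : Fin (q + 1) → Matrix (Fin n) (Fin n) ℝ)
    (hV0 : V 0 = 1) (hV : ∀ j, (V j).PosSemidef)
    (σ : Fin (q + 1) → ℝ) (hσ0 : 0 < σ 0) (hσ : ∀ j, 0 ≤ σ j)
    (X : Matrix (Fin n) (Fin p) ℝ) (hX : X.rank = p)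
    (i : Fin (q + 1)) (hi : 0 < σ i) :
    |((SigM V σ)⁻¹ * V i).trace - (Pmat V σ X * V i).trace| ≤ (p : ℝ) / σ i := by
  have hS : (SigM V σ).PosDef := posDef_SigM hV hσ (hV0 ▸ PosDef.one) hσ0
  have hX_inj : Function.Injective X.mulVec := mulVec_injective_iff_rank_eq_card_s12.mpr (by simpa)
  simpa [Pmat_eq_inv_sub_remlCorrection] using
    stmt12_general hS hX_inj hi (hV i).nonneg (smul_le_SigM hV hσ i)
end

section
/- Let V₀ = I_n and V₁, …, V_q be n×n positive semidefinite real matrices, let σ₀ > 0 and σ₁, …, σ_q ≥ 0, and set Σ = ∑_{j=0}^{q} σ_j V_j. Let X be an n×p real matrix of full column rank p, and set P = Σ⁻¹ − Σ⁻¹X(X′Σ⁻¹X)⁻¹X′Σ⁻¹. Then for all indices i, j ∈ {0, 1, …, q} with σ_i > 0 and σ_j > 0, |tr(Σ⁻¹V_iΣ⁻¹V_j) − tr(PV_iPV_j)| ≤ 3p/(σ_iσ_j). -/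
open Matrix

/-
Splitting `Σ⁻¹ = P + Q`, the matrix `Q` is a projection for the geometry of `Σ`, of rank `p`. As
`0 ≤ P ≤ Σ⁻¹`, the difference of the forms `⟨A, B⟩ = tr (S Aᵀ S B)` for `S = Σ⁻¹` and `S = P` is
positive semidefinite, so by Cauchy–Schwarz only its diagonal has to be bounded. For
`0 ≤ A ≤ Σ` the diagonal value falls short of `tr (Q Σ) = p` by
`tr (Q (Σ - A) Q (Σ - A)) + 2 tr (Q (A - A Σ⁻¹ A)) ≥ 0`. Taking `A = σ_i V_i` and `B = σ_j V_j`
gives the estimate with the constant `1` in place of `3`.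
-/

open scoped MatrixOrder

section PosSemidef

open scoped ComplexOrder

variable {𝕜 ι m : Type*} [RCLike 𝕜]

section NonnegativeCombination

variable [Fintype ι] {V : ι → Matrix m m 𝕜} {σ : ι → ℝ}

lemma smul_le_sum_smul (hV : ∀ j, (V j).PosSemidef) (hσ : ∀ j, 0 ≤ σ j) (i : ι) :
    σ i • V i ≤ ∑ j, σ j • V j :=
  Finset.single_le_sum (f := fun j => σ j • V j)
    (fun j _ => nonneg_iff_posSemidef.mpr ((hV j).smul (hσ j))) (Finset.mem_univ i)

lemma posDef_sum_smul_of_posDef (hV : ∀ j, (V j).PosSemidef) (hσ : ∀ j, 0 ≤ σ j)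
    {i : ι} (hVi : (V i).PosDef) (hσi : 0 < σ i) : (∑ j, σ j • V j).PosDef := by
  simpa only [add_sub_cancel] using
    (hVi.smul hσi).add_posSemidef (le_iff.mp (smul_le_sum_smul hV hσ i))

end NonnegativeCombination

variable [Fintype m]

lemma trace_mul_nonneg_of_posSemidef {A B : Matrix m m 𝕜} (hA : A.PosSemidef)
    (hB : B.PosSemidef) : 0 ≤ (A * B).trace := by
  obtain ⟨r, v, rfl⟩ := posSemidef_iff_eq_sum_vecMulVec.mp hA
  rw [Finset.sum_mul, trace_sum]
  refine Finset.sum_nonneg fun i _ => ?_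
  rw [vecMulVec_mul, trace_vecMulVec, dotProduct_comm, ← dotProduct_mulVec]
  exact hB.dotProduct_mulVec_nonneg (v i)

lemma posSemidef_mul_mul_of_isHermitian {A H : Matrix m m 𝕜} (hA : A.PosSemidef)
    (hH : H.IsHermitian) : (H * A * H).PosSemidef := by
  simpa only [hH.eq] using hA.conjTranspose_mul_mul_same H

lemma mul_inv_mul_self_le [DecidableEq m] {T A : Matrix m m 𝕜} (hT : T.PosDef)
    (hA : A.PosSemidef) (hAT : A ≤ T) : A * T⁻¹ * A ≤ A := by
  have hdet : IsUnit T.det := (isUnit_iff_isUnit_det T).mp hT.isUnit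
  have hTA : (T - A).PosSemidef := hAT
  have hinv : T⁻¹.IsHermitian := hT.inv.isHermitian
  have decomposition : A - A * T⁻¹ * A =
      (T - A) * (T⁻¹ * A * T⁻¹) * (T - A) + A * (T⁻¹ * (T - A) * T⁻¹) * A := by
    simp only [sub_mul, mul_sub, Matrix.mul_assoc, mul_nonsing_inv_cancel_left T _ hdet,
      nonsing_inv_mul T hdet, Matrix.mul_one, Matrix.one_mul]
    abel
  rw [le_iff, decomposition]
  exact (posSemidef_mul_mul_of_isHermitian
      (posSemidef_mul_mul_of_isHermitian hA hinv) hTA.isHermitian).add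
    (posSemidef_mul_mul_of_isHermitian
      (posSemidef_mul_mul_of_isHermitian hTA hinv) hA.isHermitian)

end PosSemidef

section WeightedProjection

open scoped ComplexOrder

variable {m : Type*} [Fintype m]

/-- `Q` is an orthogonal projection for the geometry of a covariance matrix `T`: for positive
definite `T` this says that `T^{1/2} Q T^{1/2}` is an orthogonal projection. It is phrased without
square roots. -/
structure IsWeightedProjection {𝕜 : Type*} [RCLike 𝕜] (T Q : Matrix m m 𝕜) : Prop where
  isHermitian : Q.IsHermitian
  mul_mul_self : Q * T * Q = Q

namespace IsWeightedProjection

variable {𝕜 : Type*} [RCLike 𝕜] {T Q : Matrix m m 𝕜}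

lemma posSemidef (hQ : IsWeightedProjection T Q) (hT : T.PosSemidef) : Q.PosSemidef := by
  simpa only [hQ.mul_mul_self] using posSemidef_mul_mul_of_isHermitian hT hQ.isHermitian

lemma inv_sub [DecidableEq m] (hQ : IsWeightedProjection T Q) (hT : T.PosDef) :
    IsWeightedProjection T (T⁻¹ - Q) where
  isHermitian := hT.inv.isHermitian.sub hQ.isHermitian
  mul_mul_self := by
    have hdet : IsUnit T.det := (isUnit_iff_isUnit_det T).mp hT.isUnit
    simp only [sub_mul, mul_sub, nonsing_inv_mul T hdet, Matrix.one_mul,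
      mul_nonsing_inv_cancel_right T _ hdet, hQ.mul_mul_self]
    abel

end IsWeightedProjection

end WeightedProjection

section SandwichForm

variable {m : Type*} [Fintype m]

/-- The bilinear form `⟨A, B⟩ = tr (S Aᵀ S B)`, the Frobenius form weighted by `S`. The transpose
makes it positive semidefinite on all matrices, and not only on the symmetric ones, when `S` is. -/
def sandwichForm {R : Type*} [CommRing R] (S : Matrix m m R) :
    LinearMap.BilinForm R (Matrix m m R) :=
  LinearMap.mk₂ R (fun A B => (S * Aᵀ * S * B).trace)
    (fun A₁ A₂ B => by simp only [transpose_add, mul_add, add_mul, trace_add])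
    (fun c A B => by simp only [transpose_smul, Matrix.mul_smul, Matrix.smul_mul, trace_smul])
    (fun A B₁ B₂ => by simp only [mul_add, trace_add])
    (fun c A B => by simp only [Matrix.mul_smul, trace_smul])

lemma sandwichForm_apply {R : Type*} [CommRing R] (S A B : Matrix m m R) :
    sandwichForm S A B = (S * Aᵀ * S * B).trace := rfl

lemma isSymm_sandwichForm {R : Type*} [CommRing R] {S : Matrix m m R} (hS : S.IsSymm) :
    (sandwichForm S).IsSymm where
  eq A B := by
    simp only [sandwichForm_apply]
    rw [← trace_transpose]
    simp only [transpose_mul, transpose_transpose, hS.eq]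
    rw [← Matrix.mul_assoc, ← Matrix.mul_assoc, trace_mul_comm, ← Matrix.mul_assoc,
      ← Matrix.mul_assoc]

lemma sandwichForm_self_mono {P S : Matrix m m ℝ} (hP : P.PosSemidef) (hPS : P ≤ S)
    (A : Matrix m m ℝ) : sandwichForm P A A ≤ sandwichForm S A A := by
  have hS : S.PosSemidef := nonneg_iff_posSemidef.mp (hP.nonneg.trans hPS)
  have hconj {M : Matrix m m ℝ} (hM : M.PosSemidef) : (Aᵀ * M * A).PosSemidef := by
    simpa only [conjTranspose_eq_transpose_of_trivial] using hM.conjTranspose_mul_mul_same A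
  have telescoping : sandwichForm S A A - sandwichForm P A A =
      ((S - P) * (Aᵀ * S * A)).trace + (P * (Aᵀ * (S - P) * A)).trace := by
    simp only [sandwichForm_apply, sub_mul, mul_sub, trace_sub, Matrix.mul_assoc]
    ring
  rw [← sub_nonneg, telescoping]
  exact add_nonneg (trace_mul_nonneg_of_posSemidef hPS (hconj hS))
    (trace_mul_nonneg_of_posSemidef hP (hconj hPS))

end SandwichForm

section TraceBound

variable {m : Type*} [Fintype m] [DecidableEq m] {T Q A B : Matrix m m ℝ}

lemma sandwichForm_inv_self_sub_le_trace (hT : T.PosDef) (hQ : IsWeightedProjection T Q)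
    (hA : A.PosSemidef) (hAT : A ≤ T) :
    sandwichForm T⁻¹ A A - sandwichForm (T⁻¹ - Q) A A ≤ (Q * T).trace := by
  have hQ0 : Q.PosSemidef := hQ.posSemidef hT.posSemidef
  have hAt : Aᵀ = A := isHermitian_iff_isSymm.mp hA.isHermitian
  have hsquare : 0 ≤ (Q * (T - A) * Q * (T - A)).trace :=
    trace_mul_nonneg_of_posSemidef (posSemidef_mul_mul_of_isHermitian hAT hQ.isHermitian) hAT
  have hloewner : 0 ≤ (Q * (A - A * T⁻¹ * A)).trace :=
    trace_mul_nonneg_of_posSemidef hQ0 (mul_inv_mul_self_le hT hA hAT)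
  have hQAQT : (Q * A * Q * T).trace = (Q * A).trace := by
    rw [trace_mul_comm, ← Matrix.mul_assoc, ← Matrix.mul_assoc, trace_mul_comm,
      ← Matrix.mul_assoc, ← Matrix.mul_assoc, hQ.mul_mul_self]
  have hcycle : (T⁻¹ * A * Q * A).trace = (Q * A * T⁻¹ * A).trace := by
    rw [Matrix.mul_assoc, trace_mul_comm, ← Matrix.mul_assoc]
  have hdefect : (Q * T).trace - (sandwichForm T⁻¹ A A - sandwichForm (T⁻¹ - Q) A A) =
      (Q * (T - A) * Q * (T - A)).trace + 2 * (Q * (A - A * T⁻¹ * A)).trace := by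
    simp only [sandwichForm_apply, hAt, sub_mul, mul_sub, trace_sub, hQ.mul_mul_self, hQAQT,
      hcycle, ← Matrix.mul_assoc]
    ring
  linarith

theorem abs_trace_sub_trace_le_trace (hT : T.PosDef) (hQ : IsWeightedProjection T Q)
    (hA : A.PosSemidef) (hAT : A ≤ T) (hB : B.PosSemidef) (hBT : B ≤ T) :
    |(T⁻¹ * A * T⁻¹ * B).trace - ((T⁻¹ - Q) * A * (T⁻¹ - Q) * B).trace| ≤ (Q * T).trace := by
  have hQ0 : Q.PosSemidef := hQ.posSemidef hT.posSemidef
  have hP : (T⁻¹ - Q).PosSemidef := (hQ.inv_sub hT).posSemidef hT.posSemidef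
  have hPT : T⁻¹ - Q ≤ T⁻¹ := sub_le_self _ hQ0.nonneg
  let D : LinearMap.BilinForm ℝ (Matrix m m ℝ) := sandwichForm T⁻¹ - sandwichForm (T⁻¹ - Q)
  have hD_nonneg (C : Matrix m m ℝ) : 0 ≤ D C C := sub_nonneg.mpr (sandwichForm_self_mono hP hPT C)
  have hD_symm : D.IsSymm :=
    (isSymm_sandwichForm (isHermitian_iff_isSymm.mp hT.inv.isHermitian)).sub
      (isSymm_sandwichForm (isHermitian_iff_isSymm.mp hP.isHermitian))
  have hDA : D A A ≤ (Q * T).trace := sandwichForm_inv_self_sub_le_trace hT hQ hA hAT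
  have hDB : D B B ≤ (Q * T).trace := sandwichForm_inv_self_sub_le_trace hT hQ hB hBT
  have htrace : 0 ≤ (Q * T).trace := (hD_nonneg A).trans hDA
  have hAt : Aᵀ = A := isHermitian_iff_isSymm.mp hA.isHermitian
  have hDAB : (T⁻¹ * A * T⁻¹ * B).trace - ((T⁻¹ - Q) * A * (T⁻¹ - Q) * B).trace = D A B := by
    simp only [D, LinearMap.sub_apply, sandwichForm_apply, hAt]
  rw [hDAB]
  refine abs_le_of_sq_le_sq ?_ htrace
  calc D A B ^ 2
    _ ≤ D A A * D B B :=
      D.apply_sq_le_of_symm hD_nonneg (LinearMap.BilinForm.isSymm_iff.mp hD_symm) A B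
    _ ≤ (Q * T).trace * (Q * T).trace := mul_le_mul hDA hDB (hD_nonneg B) htrace
    _ = (Q * T).trace ^ 2 := (sq _).symm

end TraceBound

section GeneralizedLeastSquares

variable {m k : Type*} [Fintype m] [DecidableEq m] [Fintype k] [DecidableEq k]

/-- The matrix `T⁻¹ H`, where `H = X (X′ T⁻¹ X)⁻¹ X′ T⁻¹` is the hat matrix of generalized least
squares with covariance `T` and design `X`; meaningful when `T` and `X′ T⁻¹ X` are invertible. -/
noncomputable def weightedHat (T : Matrix m m ℝ) (X : Matrix m k ℝ) : Matrix m m ℝ :=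
  T⁻¹ * X * (Xᵀ * T⁻¹ * X)⁻¹ * Xᵀ * T⁻¹

/-- The REML projection `T⁻¹ - T⁻¹ H` for an arbitrary covariance matrix `T`; `Pmat V σ X` is the
case `T = SigM V σ`. -/
noncomputable def remlProjection (T : Matrix m m ℝ) (X : Matrix m k ℝ) : Matrix m m ℝ :=
  T⁻¹ - weightedHat T X

variable {T : Matrix m m ℝ} {X : Matrix m k ℝ}

lemma isUnit_det_transpose_mul_inv_mul (hT : T.PosDef) (hX : LinearIndependent ℝ X.col) :
    IsUnit (Xᵀ * T⁻¹ * X).det := by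
  have hGram : (Xᴴ * T⁻¹ * X).PosDef :=
    hT.inv.conjTranspose_mul_mul_same (mulVec_injective_iff.mpr hX)
  rw [conjTranspose_eq_transpose_of_trivial] at hGram
  exact (isUnit_iff_isUnit_det _).mp hGram.isUnit

lemma weightedHat_mul (hT : IsUnit T.det) :
    weightedHat T X * T = T⁻¹ * X * (Xᵀ * T⁻¹ * X)⁻¹ * Xᵀ :=
  nonsing_inv_mul_cancel_right T _ hT

lemma isWeightedProjection_weightedHat (hT : T.PosDef) (hX : LinearIndependent ℝ X.col) :
    IsWeightedProjection T (weightedHat T X) where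
  isHermitian := by
    have hinv : (T⁻¹)ᵀ = T⁻¹ := isHermitian_iff_isSymm.mp hT.inv.isHermitian
    simp only [IsHermitian, conjTranspose_eq_transpose_of_trivial, weightedHat, transpose_mul,
      transpose_transpose, transpose_nonsing_inv, hinv, Matrix.mul_assoc]
  mul_mul_self := by
    have hdet : IsUnit T.det := (isUnit_iff_isUnit_det T).mp hT.isUnit
    set G := Xᵀ * T⁻¹ * X with hG
    calc weightedHat T X * T * weightedHat T X
      _ = T⁻¹ * X * G⁻¹ * Xᵀ * (T⁻¹ * X * G⁻¹ * Xᵀ * T⁻¹) := by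
          rw [weightedHat_mul hdet, weightedHat]
      _ = T⁻¹ * X * (G⁻¹ * G * G⁻¹) * Xᵀ * T⁻¹ := by simp only [hG, Matrix.mul_assoc]
      _ = weightedHat T X := by
        rw [nonsing_inv_mul G (isUnit_det_transpose_mul_inv_mul hT hX), Matrix.one_mul, weightedHat]

lemma trace_weightedHat_mul (hT : T.PosDef) (hX : LinearIndependent ℝ X.col) :
    (weightedHat T X * T).trace = Fintype.card k := by
  have hdet : IsUnit T.det := (isUnit_iff_isUnit_det T).mp hT.isUnit
  calc (weightedHat T X * T).trace
    _ = (T⁻¹ * X * ((Xᵀ * T⁻¹ * X)⁻¹ * Xᵀ)).trace := by rw [weightedHat_mul hdet, Matrix.mul_assoc]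
    _ = ((Xᵀ * T⁻¹ * X)⁻¹ * (Xᵀ * T⁻¹ * X)).trace := by
      rw [trace_mul_comm]
      simp only [Matrix.mul_assoc]
    _ = Fintype.card k := by
      rw [nonsing_inv_mul _ (isUnit_det_transpose_mul_inv_mul hT hX), trace_one]

end GeneralizedLeastSquares

lemma linearIndependent_col_of_rank_eq_card {R m k : Type*} [CommRing R] [Nontrivial R]
    [Fintype k] {X : Matrix m k R} (hX : X.rank = Fintype.card k) :
    LinearIndependent R X.col := by
  rw [linearIndependent_iff_card_eq_finrank_span, Set.finrank, ← rank_eq_finrank_span_cols, hX]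

theorem stmt13_general {ι m k : Type*} [Fintype ι] [Fintype m] [DecidableEq m] [Fintype k]
    [DecidableEq k] {V : ι → Matrix m m ℝ} (hV : ∀ j, (V j).PosSemidef) {σ : ι → ℝ}
    (hσ : ∀ j, 0 ≤ σ j) {T : Matrix m m ℝ} (hT : T.PosDef) (hTV : T = ∑ j, σ j • V j)
    {X : Matrix m k ℝ} (hX : LinearIndependent ℝ X.col) {i j : ι} (hi : 0 < σ i)
    (hj : 0 < σ j) :
    |(T⁻¹ * V i * T⁻¹ * V j).trace
        - (remlProjection T X * V i * remlProjection T X * V j).trace|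
      ≤ Fintype.card k / (σ i * σ j) := by
  have hsmul (l : ι) : (σ l • V l).PosSemidef := (hV l).smul (hσ l)
  have hle (l : ι) : σ l • V l ≤ T := hTV ▸ smul_le_sum_smul hV hσ l
  have hscaled := abs_trace_sub_trace_le_trace hT (isWeightedProjection_weightedHat hT hX)
    (hsmul i) (hle i) (hsmul j) (hle j)
  rw [trace_weightedHat_mul hT hX, ← remlProjection] at hscaled
  have hσij : 0 < σ i * σ j := mul_pos hi hj
  rw [le_div_iff₀ hσij, ← abs_of_pos hσij, ← abs_mul]
  refine le_of_eq_of_le (congrArg _ ?_) hscaled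
  simp only [Matrix.mul_smul, Matrix.smul_mul, trace_smul, smul_eq_mul]
  ring

/-- `|tr(Σ⁻¹V_iΣ⁻¹V_j) − tr(PV_iPV_j)| ≤ 3p/(σ_iσ_j)` (Section 5.3). -/
theorem stmt13 {n p q : ℕ}
    (V : Fin (q + 1) → Matrix (Fin n) (Fin n) ℝ)
    (hV0 : V 0 = 1) (hV : ∀ j, (V j).PosSemidef)
    (σ : Fin (q + 1) → ℝ) (hσ0 : 0 < σ 0) (hσ : ∀ j, 0 ≤ σ j)
    (X : Matrix (Fin n) (Fin p) ℝ) (hX : X.rank = p)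
    (i j : Fin (q + 1)) (hi : 0 < σ i) (hj : 0 < σ j) :
    |((SigM V σ)⁻¹ * V i * (SigM V σ)⁻¹ * V j).trace
        - (Pmat V σ X * V i * Pmat V σ X * V j).trace|
      ≤ 3 * (p : ℝ) / (σ i * σ j) := by
  have hPos : (SigM V σ).PosDef := posDef_sum_smul_of_posDef hV hσ (hV0 ▸ PosDef.one) hσ0
  have hXcol : LinearIndependent ℝ X.col :=
    linearIndependent_col_of_rank_eq_card (hX.trans (Fintype.card_fin p).symm)
  refine (stmt13_general hV hσ hPos rfl hXcol hi hj).trans ?_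
  rw [Fintype.card_fin]
  gcongr
  linarith [p.cast_nonneg (α := ℝ)]
end

section
/- For i = 1, …, t let n_i be a positive integer, λ_i > 0 a real number, and x_{ij} ∈ ℝ^{p−1} for j = 1, …, n_i. Set A = ∑_{i=1}^{t} n_i/λ_i (a scalar), B = ∑_{i=1}^{t} (1/λ_i) ∑_{j=1}^{n_i} x_{ij} (a vector in ℝ^{p−1}), C = ∑_{i=1}^{t} (1/λ_i) ∑_{j=1}^{n_i} x_{ij}x_{ij}′ (a (p−1)×(p−1) matrix), S₂ = ∑_{i=1}^{t} ∑_{j=1}^{n_i} ∑_{k=1}^{t} ∑_{l=1}^{n_k} (x_{ij} − x_{kl})(x_{ij} − x_{kl})′, and λ_M = max_{1 ≤ i ≤ t} λ_i. Then AC − BB′ ⪰ S₂/(2λ_M²), i.e., the matrix AC − BB′ − S₂/(2λ_M²) is positive semidefinite. -/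
open Matrix

/-!
Pool the observations into one family `x a` with weights `w a = 1 / λ a`. The weighted Lagrange
identity `AC - BB′ = ∑ a, ∑ b, (w a * w b / 2) (x a - x b)(x a - x b)′` exhibits both terms of the
inequality as combinations of the same positive semidefinite matrices, and `w a * w b ≥ 1 / λ_M ^ 2`
compares their coefficients.
-/

section Lagrange

variable {ι : Type*} (s : Finset ι)

theorem sum_sum_mul_smul_apply_sub_sub {R M N P : Type*} [CommRing R]
    [AddCommGroup M] [AddCommGroup N] [AddCommGroup P] [Module R M] [Module R N] [Module R P]
    (f : M →ₗ[R] N →ₗ[R] P) (w : ι → R) (u : ι → M) (v : ι → N) :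
    ∑ a ∈ s, ∑ b ∈ s, (w a * w b) • f (u a - u b) (v a - v b) =
      (2 : R) • ((∑ a ∈ s, w a) • ∑ a ∈ s, w a • f (u a) (v a) -
        f (∑ a ∈ s, w a • u a) (∑ a ∈ s, w a • v a)) := by
  have diag_right : ∑ a ∈ s, ∑ b ∈ s, (w a * w b) • f (u b) (v b) =
      (∑ a ∈ s, w a) • ∑ a ∈ s, w a • f (u a) (v a) := by
    simp only [Finset.sum_smul_sum, mul_smul]
  have diag_left : ∑ a ∈ s, ∑ b ∈ s, (w a * w b) • f (u a) (v a) =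
      (∑ a ∈ s, w a) • ∑ a ∈ s, w a • f (u a) (v a) := by
    rw [Finset.sum_comm, ← diag_right]
    simp only [mul_comm]
  have cross : ∑ a ∈ s, ∑ b ∈ s, (w a * w b) • f (u a) (v b) =
      f (∑ a ∈ s, w a • u a) (∑ a ∈ s, w a • v a) := by
    simp only [map_sum, map_smul, LinearMap.sum_apply, LinearMap.smul_apply, Finset.smul_sum,
      smul_smul]
    rw [Finset.sum_comm]
    simp only [mul_comm]
  have cross_swap : ∑ a ∈ s, ∑ b ∈ s, (w a * w b) • f (u b) (v a) =
      f (∑ a ∈ s, w a • u a) (∑ a ∈ s, w a • v a) := by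
    rw [Finset.sum_comm, ← cross]
    simp only [mul_comm]
  simp only [map_sub, LinearMap.sub_apply, smul_sub, Finset.sum_sub_distrib, diag_left, diag_right,
    cross, cross_swap, two_smul]
  abel

variable {m R : Type*} [Ring R] [StarRing R] [Algebra ℝ R] [StarModule ℝ R]

theorem weighted_scatter_eq_sum_sum (w : ι → ℝ) (x : ι → m → R) :
    (∑ a ∈ s, w a) • ∑ a ∈ s, w a • vecMulVec (x a) (star (x a)) -
        vecMulVec (∑ a ∈ s, w a • x a) (star (∑ a ∈ s, w a • x a)) =
      ∑ a ∈ s, ∑ b ∈ s, (w a * w b / 2) • vecMulVec (x a - x b) (star (x a - x b)) := by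
  have lagrange := sum_sum_mul_smul_apply_sub_sub s
    (vecMulVecBilin ℝ ℝ : (m → R) →ₗ[ℝ] (m → R) →ₗ[ℝ] Matrix m m R) w x (star x)
  simp only [vecMulVecBilin_apply_apply, Pi.star_apply] at lagrange
  have star_weighted_sum : ∑ a ∈ s, w a • star (x a) = star (∑ a ∈ s, w a • x a) := by
    simp only [star_sum, star_smul, star_trivial]
  simp only [star_weighted_sum, ← star_sub] at lagrange
  rw [← inv_smul_eq_iff₀ two_ne_zero] at lagrange
  rw [← lagrange]
  simp only [Finset.smul_sum, smul_smul, div_eq_inv_mul]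

end Lagrange

theorem inv_two_mul_sq_le_inv_mul_inv_div_two {K : Type*} [Field K] [LinearOrder K]
    [IsStrictOrderedRing K] {a b M : K} (ha : 0 < a) (hb : 0 < b) (haM : a ≤ M) (hbM : b ≤ M) :
    (2 * M ^ 2)⁻¹ ≤ a⁻¹ * b⁻¹ / 2 := by
  have hM : 0 ≤ M := ha.le.trans haM
  calc (2 * M ^ 2)⁻¹ = M⁻¹ * M⁻¹ / 2 := by rw [mul_inv, sq, mul_inv]; ring
    _ ≤ a⁻¹ * b⁻¹ / 2 := by gcongr

section Loewner

variable {ι m R : Type*} [Finite m] [Ring R] [PartialOrder R] [StarRing R] [StarOrderedRing R]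
  [Algebra ℝ R] [StarModule ℝ R] [PosSMulMono ℝ R]

theorem posSemidef_weighted_scatter_sub_smul (s : Finset ι) (w : ι → ℝ) (x : ι → m → R) {c : ℝ}
    (hc : ∀ a ∈ s, ∀ b ∈ s, c ≤ w a * w b / 2) :
    PosSemidef ((∑ a ∈ s, w a) • ∑ a ∈ s, w a • vecMulVec (x a) (star (x a)) -
      vecMulVec (∑ a ∈ s, w a • x a) (star (∑ a ∈ s, w a • x a)) -
      c • ∑ a ∈ s, ∑ b ∈ s, vecMulVec (x a - x b) (star (x a - x b))) := by
  rw [weighted_scatter_eq_sum_sum]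
  simp only [Finset.smul_sum, ← Finset.sum_sub_distrib, ← sub_smul]
  exact posSemidef_sum s fun a ha => posSemidef_sum s fun b hb =>
    (posSemidef_vecMulVec_self_star (x a - x b)).smul (sub_nonneg.2 (hc a ha b hb))

theorem stmt15_general [Fintype ι] {κ : ι → Type*} [∀ i, Fintype (κ i)] (lam : ι → ℝ)
    (hlam : ∀ i, 0 < lam i) {M : ℝ} (hM : ∀ i, lam i ≤ M) (x : (i : ι) → κ i → m → R) :
    PosSemidef
      ((∑ i, (Fintype.card (κ i) : ℝ) / lam i) •
          (∑ i, (lam i)⁻¹ • ∑ j, vecMulVec (x i j) (star (x i j)))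
        - vecMulVec (∑ i, (lam i)⁻¹ • ∑ j, x i j) (star (∑ i, (lam i)⁻¹ • ∑ j, x i j))
        - (2 * M ^ 2)⁻¹ •
            ∑ i, ∑ j, ∑ k, ∑ l, vecMulVec (x i j - x k l) (star (x i j - x k l))) := by
  have pooled := posSemidef_weighted_scatter_sub_smul (Finset.univ : Finset (Σ i, κ i))
    (fun a => (lam a.1)⁻¹) (fun a => x a.1 a.2) fun a _ b _ =>
      inv_two_mul_sq_le_inv_mul_inv_div_two (hlam a.1) (hlam b.1) (hM a.1) (hM b.1)
  simpa only [Fintype.sum_sigma, Finset.sum_const, Finset.card_univ, nsmul_eq_mul,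
    ← div_eq_mul_inv, ← Finset.smul_sum] using pooled

end Loewner

/-- Section 5.7: with `A = ∑ n_i/λ_i`, `B = ∑ λ_i⁻¹ ∑_j x_{ij}`,
`C = ∑ λ_i⁻¹ ∑_j x_{ij}x_{ij}′`,
`S₂ = ∑_{i,j,k,l} (x_{ij} − x_{kl})(x_{ij} − x_{kl})′` and `λ_M = max_i λ_i`, one has
`AC − BB′ ⪰ S₂/(2λ_M²)` in the Loewner order. -/
theorem stmt15 {t d : ℕ} (ht : 0 < t) (n : Fin t → ℕ) (hn : ∀ i, 0 < n i)
    (lam : Fin t → ℝ) (hlam : ∀ i, 0 < lam i)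
    (x : (i : Fin t) → Fin (n i) → (Fin d → ℝ)) :
    Matrix.PosSemidef
      ((∑ i, (n i : ℝ) / lam i) • (∑ i, (lam i)⁻¹ • ∑ j, vecMulVec (x i j) (x i j))
        - vecMulVec (∑ i, (lam i)⁻¹ • ∑ j, x i j) (∑ i, (lam i)⁻¹ • ∑ j, x i j)
        - (2 * (Finset.univ.sup' ⟨⟨0, ht⟩, Finset.mem_univ _⟩ lam) ^ 2)⁻¹ •
            ∑ i, ∑ j, ∑ k, ∑ l, vecMulVec (x i j - x k l) (x i j - x k l)) := by
  simpa only [star_trivial, Fintype.card_fin] using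
    stmt15_general lam hlam (fun i => Finset.le_sup' lam (Finset.mem_univ i)) x
end
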